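/- arXiv:2503.12241 — 3 statements merged into one kernel-verified Lean document; each statement's English description precedes it below -/
import Mathlib

section
/- Let S = ⟨a, ah + d, ah + 2d, …, ah + kd⟩ be generated by a generalized arithmetic sequence, with h ≥ 1, d ≥ 1, 2 ≤ k < a, and gcd(a, d) = 1. Then Δ_0(S) = {1, 2}. -/
open Finset

/-- `Zfac a x`: the set of factorizations of `x` with respect to the generators `a`. -/
def Zfac {k : ℕ} (a : Fin k → ℕ) (x : ℕ) : Set (Fin k → ℕ) :=
  {z | ∑ j, z j * a j = x}

/-- The `∞`-length of a factorization: the maximum coordinate. -/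
def linf {k : ℕ} (z : Fin k → ℕ) : ℕ :=
  Finset.univ.sup z

/-- The `0`-length of a factorization: the size of its support. -/
def lzero {k : ℕ} (z : Fin k → ℕ) : ℕ :=
  (Finset.univ.filter fun i => z i ≠ 0).card

/-- `𝓛∞(x)`: the set of `∞`-lengths of factorizations of `x`. -/
def LinfSet {k : ℕ} (a : Fin k → ℕ) (x : ℕ) : Set ℕ :=
  linf '' Zfac a x

/-- `𝓛∞(x, i)`: `∞`-lengths of factorizations whose maximum coordinate is attained at `i`. -/
def LinfSetI {k : ℕ} (a : Fin k → ℕ) (x : ℕ) (i : Fin k) : Set ℕ :=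
  linf '' {z | z ∈ Zfac a x ∧ z i = linf z}

/-- `𝓛₀(x)`: the set of `0`-lengths of factorizations of `x`. -/
def LzeroSet {k : ℕ} (a : Fin k → ℕ) (x : ℕ) : Set ℕ :=
  lzero '' Zfac a x

/-- The set of differences between consecutive elements of a set `T ⊆ ℕ`. -/
def deltaSet (T : Set ℕ) : Set ℕ :=
  {d | ∃ u ∈ T, ∃ v ∈ T, u < v ∧ v - u = d ∧ ∀ t ∈ T, ¬(u < t ∧ t < v)}

/-- `Δ∞(x)`. -/
def DeltaInf {k : ℕ} (a : Fin k → ℕ) (x : ℕ) : Set ℕ := deltaSet (LinfSet a x)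

/-- `Δ∞(S) = ⋃ x ∈ S, Δ∞(x)` (for `x ∉ S` the contribution is empty). -/
def DeltaInfS {k : ℕ} (a : Fin k → ℕ) : Set ℕ := ⋃ x : ℕ, DeltaInf a x

/-- `Δ₀(x)`. -/
def DeltaZero {k : ℕ} (a : Fin k → ℕ) (x : ℕ) : Set ℕ := deltaSet (LzeroSet a x)

/-- `Δ₀(S) = ⋃ x ∈ S, Δ₀(x)` (for `x ∉ S` the contribution is empty). -/
def DeltaZeroS {k : ℕ} (a : Fin k → ℕ) : Set ℕ := ⋃ x : ℕ, DeltaZero a x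

/-- `a` is a system of minimal generators: no generator is a `ℕ`-combination of the others. -/
def MinimalGens {k : ℕ} (a : Fin k → ℕ) : Prop :=
  ∀ i : Fin k, ¬ ∃ z : Fin k → ℕ, z i = 0 ∧ ∑ j, z j * a j = a i

/-- The value of a factorization, with weights `g`. -/
def fval {m : ℕ} (g : Fin m → ℕ) (z : Fin m → ℕ) : ℕ := ∑ j, z j * g j

lemma fval_add {m : ℕ} (g z w : Fin m → ℕ) : fval g (z + w) = fval g z + fval g w := by
  simp [fval, add_mul, Finset.sum_add_distrib]

lemma fval_single {m : ℕ} (g : Fin m → ℕ) (i : Fin m) (c : ℕ) :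
    fval g (Pi.single i c) = c * g i := by
  unfold fval
  rw [Finset.sum_eq_single i]
  · simp
  · intro b _ hb
    simp [Pi.single_eq_of_ne hb]
  · simp

lemma lzero_le_add {m : ℕ} (z w : Fin m → ℕ) : lzero z ≤ lzero (z + w) := by
  unfold lzero
  apply Finset.card_le_card
  intro i
  simp
  omega

lemma lzero_add_single {m : ℕ} (z : Fin m → ℕ) (i : Fin m) (c : ℕ) :
    lzero (z + Pi.single i c) ≤ lzero z + 1 := by
  unfold lzero
  refine (Finset.card_le_card ?_).trans (Finset.card_insert_le i _)
  intro j
  by_cases hj : j = i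
  · simp [hj]
  · simp [Pi.single_eq_of_ne hj]
    tauto

lemma lzero_compl {m : ℕ} (z : Fin m → ℕ) :
    lzero z + (Finset.univ.filter fun i => z i = 0).card = m := by
  unfold lzero
  have := Finset.card_filter_add_card_filter_not (s := (Finset.univ : Finset (Fin m)))
    (fun i => z i = 0)
  simp only [Finset.card_univ, Fintype.card_fin] at this
  simp only [ne_eq]
  omega

/-- One merging step. -/
lemma merge_step (a h d k : ℕ) (g : Fin (k + 1) → ℕ)
    (hg : g = fun i : Fin (k + 1) => if (i : ℕ) = 0 then a else a * h + (i : ℕ) * d)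
    (μ : Fin (k + 1) → ℕ)
    (hμ : μ = fun i : Fin (k + 1) => if (i : ℕ) = 0 ∨ (i : ℕ) = k then 0 else 1)
    (z : Fin (k + 1) → ℕ) (hz : 4 ≤ lzero z) :
    ∃ z', fval g z' = fval g z ∧ fval μ z' < fval μ z ∧ lzero z ≤ lzero z' + 2 := by
  have hcard : 1 < ((Finset.univ.filter fun i => z i ≠ 0) \ {0, Fin.last k}).card := by
    have h1 := Finset.le_card_sdiff {0, Fin.last k} (Finset.univ.filter fun i => z i ≠ 0)
    have h2 : ({0, Fin.last k} : Finset (Fin (k+1))).card ≤ 2 := Finset.card_le_two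
    unfold lzero at hz
    omega
  obtain ⟨i, hi, j, hj, hij⟩ := Finset.one_lt_card.1 hcard
  simp only [Finset.mem_sdiff, Finset.mem_filter, Finset.mem_univ, true_and,
    Finset.mem_insert, Finset.mem_singleton, not_or] at hi hj
  obtain ⟨hi, hi0, hik⟩ := hi
  obtain ⟨hj, hj0, hjk⟩ := hj
  have hi0' : (i : ℕ) ≠ 0 := fun e => hi0 (Fin.ext e)
  have hj0' : (j : ℕ) ≠ 0 := fun e => hj0 (Fin.ext e)
  have hik' : (i : ℕ) ≠ k := fun e => hik (Fin.ext e)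
  have hjk' : (j : ℕ) ≠ k := fun e => hjk (Fin.ext e)
  have hi1 := i.2
  have hj1 := j.2
  obtain ⟨w, hw⟩ : ∃ w : Fin (k + 1) → ℕ, z = w + Pi.single i 1 + Pi.single j 1 := by
    refine ⟨fun t => z t - (if t = i then 1 else 0) - (if t = j then 1 else 0), ?_⟩
    funext t
    simp only [Pi.add_apply, Pi.single_apply]
    by_cases ht : t = i
    · subst ht
      rw [if_pos rfl, if_neg hij]
      omega
    · by_cases ht' : t = j
      · subst ht'
        rw [if_pos rfl, if_neg ht]
        omega
      · rw [if_neg ht, if_neg ht']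
        omega
  have hlw : lzero z ≤ lzero w + 2 := by
    rw [hw]
    have := lzero_add_single (w + Pi.single i 1) j 1
    have := lzero_add_single w i 1
    omega
  have hgi : g i = a * h + i * d := by simp [hg, hi0]
  have hgj : g j = a * h + j * d := by simp [hg, hj0]
  have hμi : μ i = 1 := by simp [hμ, hi0, hik']
  have hμj : μ j = 1 := by simp [hμ, hj0, hjk']
  by_cases hs : (i : ℕ) + j ≤ k
  · refine ⟨w + (Pi.single 0 h + Pi.single ⟨i + j, by omega⟩ 1), ?_, ?_, ?_⟩
    · rw [hw]
      simp only [fval_add, fval_single, hgi, hgj]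
      have e1 : g 0 = a := by simp [hg]
      have e2 : g ⟨i + j, by omega⟩ = a * h + (i + j) * d := by
        simp only [hg]; rw [if_neg (by omega)]
      rw [e1, e2]; ring
    · rw [hw]
      simp only [fval_add, fval_single, hμi, hμj]
      have e1 : μ 0 = 0 := by simp [hμ]
      have e2 : μ ⟨i + j, by omega⟩ ≤ 1 := by
        simp only [hμ]; split_ifs <;> omega
      rw [e1]; omega
    · have := lzero_le_add w (Pi.single 0 h + Pi.single ⟨i + j, by omega⟩ 1)
      omega
  · refine ⟨w + (Pi.single (Fin.last k) 1 + Pi.single ⟨i + j - k, by omega⟩ 1), ?_, ?_, ?_⟩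
    · rw [hw]
      simp only [fval_add, fval_single, hgi, hgj]
      have e1 : g (Fin.last k) = a * h + k * d := by
        simp only [hg, Fin.val_last]; rw [if_neg (by omega)]
      have e2 : g ⟨i + j - k, by omega⟩ = a * h + (i + j - k) * d := by
        simp only [hg]; rw [if_neg (by omega)]
      rw [e1, e2]
      obtain ⟨r, hr⟩ : ∃ r, (i : ℕ) + j = k + r := ⟨i + j - k, by omega⟩
      have e3 : (i : ℕ) + j - k = r := by omega
      rw [e3]
      have e4 : (i : ℕ) * d + j * d = k * d + r * d := by rw [← add_mul, hr, add_mul]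
      linarith
    · rw [hw]
      simp only [fval_add, fval_single, hμi, hμj]
      have e1 : μ (Fin.last k) = 0 := by simp [hμ]
      have e2 : μ ⟨i + j - k, by omega⟩ ≤ 1 := by
        simp only [hμ]; split_ifs <;> omega
      rw [e1]; omega
    · have := lzero_le_add w (Pi.single (Fin.last k) 1 + Pi.single ⟨i + j - k, by omega⟩ 1)
      omega

lemma descend (a h d k : ℕ) (g : Fin (k + 1) → ℕ)
    (hg : g = fun i : Fin (k + 1) => if (i : ℕ) = 0 then a else a * h + (i : ℕ) * d)
    (v : ℕ) (hv : 4 ≤ v) (n : ℕ) : ∀ z : Fin (k + 1) → ℕ,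
    fval (fun i : Fin (k + 1) => if (i : ℕ) = 0 ∨ (i : ℕ) = k then 0 else 1) z ≤ n →
    v ≤ lzero z → ∃ z', fval g z' = fval g z ∧ lzero z' < v ∧ v ≤ lzero z' + 2 := by
  induction n with
  | zero =>
    intro z hz hvz
    obtain ⟨z', _, h2, _⟩ := merge_step a h d k g hg _ rfl z (by omega)
    omega
  | succ n ih =>
    intro z hz hvz
    obtain ⟨z', h1, h2, h3⟩ := merge_step a h d k g hg _ rfl z (by omega)
    by_cases hlt : lzero z' < v
    · exact ⟨z', h1, hlt, by omega⟩
    · obtain ⟨z'', e1, e2, e3⟩ := ih z' (by omega) (by omega)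
      exact ⟨z'', e1.trans h1, e2, e3⟩

/-- No factorization of `h a + ∑ g_i` misses exactly one generator. -/
lemma no_len_k (a h d k : ℕ) (hh : 1 ≤ h) (hd : 1 ≤ d) (hk : 2 ≤ k) (hka : k < a)
    (hcop : Nat.Coprime a d) (z : Fin (k + 1) → ℕ)
    (hval : z 0 * a + ∑ i : Fin k, z i.succ * (a * h + (i + 1) * d)
      = h * a + ∑ i : Fin k, (a * h + (i + 1) * d)) (hl : lzero z = k) : False := by
  have hc := lzero_compl z
  have hc1 : (Finset.univ.filter fun i => z i = 0).card = 1 := by omega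
  obtain ⟨j, hj⟩ := Finset.card_eq_one.1 hc1
  have hzj : ∀ i, z i = 0 ↔ i = j := by
    intro i
    have : i ∈ (Finset.univ.filter fun i => z i = 0) ↔ i ∈ ({j} : Finset _) := by rw [hj]
    simpa using this
  have hah : 0 < a * h := Nat.mul_pos (by omega) (by omega)
  have key : ∀ p : ℕ, ∀ q : ℕ, ∀ A B : ℕ, p < a → q < a → a * A + d * p = a * B + d * q → p = q := by
    intro p q A B hp hq e
    have h1 : d * p ≡ d * q [MOD a] := by
      have : (a * A + d * p) % a = (a * B + d * q) % a := by rw [e]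
      simpa [Nat.ModEq, Nat.add_mod, Nat.mul_mod_right] using this
    have h2 := Nat.ModEq.cancel_left_of_coprime (by simpa using hcop) h1
    exact Nat.ModEq.eq_of_lt_of_lt h2 hp hq
  refine Fin.cases (motive := fun j => (∀ i, z i = 0 ↔ i = j) → False) ?_ ?_ j hzj
  · intro hzj
    have hz0 : z 0 = 0 := (hzj 0).2 rfl
    have hpos : ∀ i : Fin k, ∃ w, z i.succ = 1 + w := by
      intro i
      have : z i.succ ≠ 0 := fun e => Fin.succ_ne_zero i ((hzj _).1 e)
      exact ⟨z i.succ - 1, by omega⟩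
    choose w hw using hpos
    simp only [hw, hz0, add_mul, one_mul, Finset.sum_add_distrib, zero_mul, zero_add] at hval
    have hval' : ∑ i : Fin k, w i * (a * h + (i + 1) * d) = h * a := by
      simp only [add_mul, one_mul, mul_add, Finset.sum_add_distrib] at hval ⊢
      linarith
    by_cases hw0 : ∀ i, w i = 0
    · simp [hw0] at hval'
      rcases hval' with h1 | h1 <;> omega
    · push Not at hw0
      obtain ⟨i, hi⟩ := hw0
      have h1 := Finset.single_le_sum (f := fun i : Fin k => w i * (a * h + (i + 1) * d))
        (fun _ _ => Nat.zero_le _) (Finset.mem_univ i)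
      have h2 : 1 * (a * h + (i + 1) * d) ≤ w i * (a * h + (i + 1) * d) :=
        Nat.mul_le_mul_right _ (by omega)
      have h3 : 0 < ((i : ℕ) + 1) * d := Nat.mul_pos (by omega) (by omega)
      rw [hval'] at h1
      linarith
  · intro j hzj
    have hA : z 0 ≠ 0 := fun e => Fin.succ_ne_zero j ((hzj 0).1 e).symm
    have hjz : z j.succ = 0 := (hzj _).2 rfl
    have hpos : ∀ i : Fin k, ∃ w, z i.succ + (Pi.single j 1 : Fin k → ℕ) i = 1 + w ∧ (i = j → w = 0) := by
      intro i
      by_cases hij : i = j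
      · subst hij
        exact ⟨0, by simp [hjz], fun _ => rfl⟩
      · have : z i.succ ≠ 0 := fun e => hij (Fin.succ_injective _ ((hzj _).1 e))
        exact ⟨z i.succ - 1, by rw [Pi.single_eq_of_ne hij]; omega, fun e => (hij e).elim⟩
    choose w hw hwj using hpos
    have hsum : ∑ i : Fin k, z i.succ * (a * h + (i + 1) * d) + (a * h + (j + 1) * d)
        = ∑ i : Fin k, (a * h + (i + 1) * d) + ∑ i : Fin k, w i * (a * h + (i + 1) * d) := by
      have e0 := fval_single (fun i : Fin k => a * h + ((i : ℕ) + 1) * d) j 1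
      unfold fval at e0
      rw [one_mul] at e0
      rw [← e0, ← Finset.sum_add_distrib, ← Finset.sum_add_distrib]
      refine Finset.sum_congr rfl fun i _ => ?_
      rw [← add_mul, hw i]; ring
    have hmain : z 0 * a + ∑ i : Fin k, w i * (a * h + (i + 1) * d)
        = 2 * (a * h) + (j + 1) * d := by linarith
    have hsplit : ∑ i : Fin k, w i * (a * h + (i + 1) * d)
        = a * h * (∑ i, w i) + d * ∑ i : Fin k, w i * (i + 1) := by
      rw [Finset.mul_sum, Finset.mul_sum, ← Finset.sum_add_distrib]
      exact Finset.sum_congr rfl fun i _ => by ring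
    have hjk := j.2
    rcases Nat.lt_or_ge (∑ i, w i) 2 with hn | hn
    · by_cases hw0 : ∀ i, w i = 0
      · simp only [hw0, zero_mul, Finset.sum_const_zero, add_zero] at hmain
        have := key 0 (j + 1) (z 0) (2 * h) (by omega) (by omega) (by linarith)
        omega
      · push Not at hw0
        obtain ⟨i, hi⟩ := hw0
        have hrest : ∀ t, t ≠ i → w t = 0 := by
          intro t ht
          have := Finset.sum_le_sum_of_subset (f := w) (Finset.subset_univ {t, i})
          rw [Finset.sum_pair ht] at this
          omega
        have hi1 : w i = 1 := by
          have := Finset.single_le_sum (f := w) (fun _ _ => Nat.zero_le _) (Finset.mem_univ i)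
          omega
        rw [Finset.sum_eq_single i (fun b _ hb => by rw [hrest b hb, zero_mul]) (by simp),
          hi1, one_mul] at hmain
        have hik := i.2
        have := key (i + 1) (j + 1) (z 0 + h) (2 * h) (by omega) (by omega) (by linarith)
        exact hi (hwj i (Fin.ext (by omega)))
    · rw [hsplit] at hmain
      set s := ∑ i : Fin k, w i * ((i : ℕ) + 1) with hs
      obtain ⟨c, hc⟩ := Nat.exists_eq_add_of_le hn
      rw [hc] at hmain
      have hm2 : a * (z 0 + h * c) + d * s = a * 0 + d * (j + 1) := by linarith
      have hzp : 0 < a * (z 0 + h * c) := Nat.mul_pos (by omega) (by omega)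
      have hlt : d * s < d * (j + 1) := by omega
      have hlt' : s < j + 1 := lt_of_mul_lt_mul_left hlt (Nat.zero_le _)
      have := key s (j + 1) _ _ (by omega) (by omega) hm2
      omega

lemma lzero_single {m : ℕ} (i : Fin m) (c : ℕ) (hc : c ≠ 0) :
    lzero (Pi.single i c : Fin m → ℕ) = 1 := by
  unfold lzero
  rw [Finset.card_eq_one]
  refine ⟨i, ?_⟩
  ext t
  by_cases ht : t = i
  · simp [ht, hc]
  · simp [ht, Pi.single_eq_of_ne ht]

/-- For `S = ⟨a, ah + d, ah + 2d, …, ah + kd⟩` generated by a generalized arithmetic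
sequence with `h ≥ 1`, `2 ≤ k < a`, `gcd(a,d) = 1`, one has `Δ₀(S) = {1, 2}`. -/
theorem stmt_16 (a h d k : ℕ) (hh : 1 ≤ h) (hd : 1 ≤ d) (hk : 2 ≤ k) (hka : k < a)
    (hcop : Nat.Coprime a d) :
    DeltaZeroS (fun i : Fin (k + 1) =>
      if (i : ℕ) = 0 then a else a * h + (i : ℕ) * d) = {1, 2} := by
  generalize hg : (fun i : Fin (k + 1) =>
      if (i : ℕ) = 0 then a else a * h + (i : ℕ) * d) = g
  have hg0 : g 0 = a := by simp [← hg]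
  have hgs : ∀ i : Fin k, g i.succ = a * h + (i + 1) * d := by
    intro i; simp [← hg]
  have hfv : ∀ z : Fin (k+1) → ℕ, fval g z
      = z 0 * a + ∑ i : Fin k, z i.succ * (a * h + (i + 1) * d) := by
    intro z
    unfold fval
    rw [Fin.sum_univ_succ, hg0]
    simp only [hgs]
  ext e
  simp only [DeltaZeroS, DeltaZero, deltaSet, LzeroSet, Set.mem_iUnion, Set.mem_ofPred_eq,
    Set.mem_insert_iff, Set.mem_singleton_iff]
  constructor
  · rintro ⟨x, u, ⟨zu, hzu, rfl⟩, v, ⟨zv, hzv, rfl⟩, huv, he, hgap⟩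
    by_contra hcon
    have hv3 : lzero zu + 3 ≤ lzero zv := by omega
    have hu1 : 1 ≤ lzero zu := by
      by_contra h0
      have h0' : lzero zu = 0 := by omega
      have hzu0 : ∀ i, zu i = 0 := by
        unfold lzero at h0'
        rw [Finset.card_eq_zero, Finset.filter_eq_empty_iff] at h0'
        intro i
        simpa using h0' (Finset.mem_univ i)
      have hx : x = 0 := by
        have : ∑ j, zu j * g j = x := hzu
        simpa [hzu0] using this.symm
      have hzv' : ∑ j, zv j * g j = 0 := by
        have : ∑ j, zv j * g j = x := hzv
        rw [this, hx]
      have hzv0 : ∀ i, zv i = 0 := by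
        intro i
        have := (Finset.sum_eq_zero_iff.1 hzv') i (Finset.mem_univ i)
        have hgi : 0 < g i := by
          rw [← hg]; simp only
          have : 0 < a * h := Nat.mul_pos (by omega) (by omega)
          split_ifs <;> omega
        rcases Nat.mul_eq_zero.1 this with h1 | h1 <;> omega
      have : lzero zv = 0 := by simp [lzero, hzv0]
      omega
    obtain ⟨z', h1, h2, h3⟩ := descend a h d k g hg.symm (lzero zv) (by omega) _ zv le_rfl le_rfl
    have hz' : z' ∈ Zfac g x := by
      have h4 : fval g zv = x := hzv
      exact h1.trans h4
    exact hgap _ ⟨z', hz', rfl⟩ ⟨by omega, h2⟩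
  · rintro (rfl | rfl)
    · let i1 : Fin (k+1) := ⟨1, by omega⟩
      let i2 : Fin (k+1) := ⟨2, by omega⟩
      have h1 : g i1 = a * h + d := by simp [← hg, i1]
      have h2 : g i2 = a * h + 2 * d := by simp [← hg, i2]
      refine ⟨2 * g i1, 1, ⟨Pi.single i1 2, fval_single g i1 2, lzero_single _ _ (by omega)⟩,
        2, ⟨Pi.single 0 h + Pi.single i2 1, ?_, ?_⟩, by omega, by omega, by omega⟩
      · change fval g _ = _
        rw [fval_add, fval_single, fval_single, h1, h2, hg0]; ring
      · have h02 : (0 : Fin (k+1)) ≠ i2 := by simp [i2, Fin.ext_iff]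
        unfold lzero
        rw [Finset.card_eq_two]
        refine ⟨0, i2, h02, ?_⟩
        ext t
        by_cases ht : t = 0
        · subst ht; simp; omega
        · by_cases ht2 : t = i2
          · subst ht2; simp
          · simp [ht, ht2, Pi.single_eq_of_ne ht, Pi.single_eq_of_ne ht2]
    · let z1 : Fin (k+1) → ℕ := fun i => if (i : ℕ) = 0 then h else 1
      have hz1 : fval g z1 = h * a + ∑ i : Fin k, (a * h + (i + 1) * d) := by
        rw [hfv]; simp [z1]
      refine ⟨fval g z1, k - 1, ?_, k + 1, ⟨z1, rfl, ?_⟩, by omega, by omega, ?_⟩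
      · rcases Nat.lt_or_ge 2 k with hk3 | hk2
        · let z2 : Fin (k+1) → ℕ := fun i => if (i : ℕ) = 0 then 2 * h else
            if (i : ℕ) = 1 ∨ (i : ℕ) = k - 1 then 0 else if (i : ℕ) = k then 2 else 1
          let i1 : Fin (k+1) := ⟨1, by omega⟩
          let i2 : Fin (k+1) := ⟨k - 1, by omega⟩
          refine ⟨z2, ?_, ?_⟩
          · change fval g z2 = fval g z1
            have hzz : z2 + Pi.single i1 1 + Pi.single i2 1
                = z1 + Pi.single 0 h + Pi.single (Fin.last k) 1 := by
              funext t
              simp only [Pi.add_apply, Pi.single_apply, z1, z2, i1, i2, Fin.ext_iff,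
                Fin.val_zero, Fin.val_last]
              split_ifs <;> omega
            have := congrArg (fval g) hzz
            simp only [fval_add, fval_single] at this
            have e1 : g i1 = a * h + d := by simp [← hg, i1]
            have e2 : g i2 = a * h + (k - 1) * d := by
              simp only [← hg, i2]; rw [if_neg (by omega)]
            have e3 : g (Fin.last k) = a * h + k * d := by
              simp only [← hg, Fin.val_last]; rw [if_neg (by omega)]
            rw [e1, e2, e3, hg0] at this
            have e4 : k * d = (k - 1) * d + d := by
              obtain ⟨c, rfl⟩ := Nat.exists_eq_add_of_le hk
              have : 2 + c - 1 = 1 + c := by omega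
              rw [this]; ring
            rw [e4] at this
            linarith
          · have hc := lzero_compl z2
            have : (Finset.univ.filter fun i => z2 i = 0) = {i1, i2} := by
              ext t
              simp only [Finset.mem_filter, Finset.mem_univ, true_and, Finset.mem_insert,
                Finset.mem_singleton, z2, i1, i2, Fin.ext_iff]
              split_ifs <;> first | omega | (simp; done) | (simp; omega) | grind
            rw [this, Finset.card_pair (by simp [i1, i2]; omega)] at hc
            omega
        · obtain rfl : k = 2 := by omega
          refine ⟨Pi.single 1 3, ?_, lzero_single _ _ (by omega)⟩
          change fval g _ = fval g z1
          rw [fval_single, hz1]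
          have e1 : g 1 = a * h + d := by simp [← hg]
          rw [e1]
          simp [Fin.sum_univ_two]
          ring
      · have hc := lzero_compl z1
        have : (Finset.univ.filter fun i => z1 i = 0) = ∅ := by
          rw [Finset.filter_eq_empty_iff]
          intro t _
          simp only [z1]
          split_ifs <;> first | omega | (simp; done) | grind
        rw [this] at hc
        simpa using hc
      · rintro _ ⟨z, hz, rfl⟩ ⟨hl1, hl2⟩
        have hz' : fval g z = fval g z1 := hz
        rw [hfv, hz1] at hz'
        exact no_len_k a h d k hh hd hk hka hcop z hz' (by omega)
end

section
/- Let S = ⟨a_1, a_2, a_3⟩ be a numerical semigroup with three minimal generators. If S admits at most one expression as a gluing, then Δ_0(S) = {1, 2}; if S admits at least two distinct expressions as a gluing, then Δ_0(S) = {1}. -/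
open Finset

/-- `S = ⟨a₁, a₂, a₃⟩` admits an expression as a gluing whose singleton part is the `i`-th
generator: `S = t'S' + t''S''` with `S'' = ⟨c⟩`, `a i = t''·c`, `S' = ⟨b j : j ≠ i⟩`,
`a j = t'·b j` for `j ≠ i`, `t' ∈ S'' ∖ {c}`, `t'' ∈ S' ∖ {b j : j ≠ i}`, and
`gcd(t', t'') = 1`. -/
def IsGluingAt (a : Fin 3 → ℕ) (i : Fin 3) : Prop :=
  ∃ (t' t'' c : ℕ) (b : Fin 3 → ℕ),
    a i = t'' * c ∧
    (∀ j, j ≠ i → a j = t' * b j) ∧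
    (∃ n : ℕ, t' = n * c) ∧ t' ≠ c ∧
    (∃ z : Fin 3 → ℕ, z i = 0 ∧ t'' = ∑ j, z j * b j) ∧
    (∀ j, j ≠ i → t'' ≠ b j) ∧
    Nat.gcd t' t'' = 1

/-- `k * a` in the nonnegative span of `b`, `c` forces `m ≤ k`. -/
def MinRel (a b c m : ℤ) : Prop :=
  ∀ k y z : ℤ, 0 < k → 0 ≤ y → 0 ≤ z → k * a = y * b + z * c → m ≤ k

/-- gluing with singleton part `a`. -/
def GlueN (a b c : ℕ) : Prop := ∃ y z : ℕ, Nat.gcd b c * a = y * b + z * c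

/-- some multiple of `a` has a factorization of full support but none of support two. -/
def Gap (a b c : ℕ) : Prop :=
  ∃ n p q r : ℕ, 0 < p ∧ 0 < q ∧ 0 < r ∧ n * a = p * a + q * b + r * c ∧
    (∀ y z : ℕ, 0 < y → 0 < z → n * a ≠ y * a + z * b) ∧
    (∀ y z : ℕ, 0 < y → 0 < z → n * a ≠ y * a + z * c) ∧
    (∀ y z : ℕ, 0 < y → 0 < z → n * a ≠ y * b + z * c)

theorem exists_min (a b c : ℕ) (ha : 0 < a) (hb : 0 < b) :
    ∃ m y z : ℕ, 0 < m ∧ m * a = y * b + z * c ∧ MinRel a b c m := by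
  classical
  have hex : ∃ m : ℕ, 0 < m ∧ ∃ y z : ℕ, m * a = y * b + z * c :=
    ⟨b, hb, a, 0, by ring⟩
  obtain ⟨h0, y, z, h⟩ := Nat.find_spec hex
  refine ⟨Nat.find hex, y, z, h0, h, ?_⟩
  intro k y z hk hy hz e
  lift k to ℕ using hk.le
  lift y to ℕ using hy
  lift z to ℕ using hz
  have : Nat.find hex ≤ k := Nat.find_min' hex ⟨by exact_mod_cast hk, y, z, by exact_mod_cast e⟩
  exact_mod_cast this

theorem MinRel.symm {a b c m : ℤ} (h : MinRel a b c m) : MinRel a c b m := by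
  intro k y z hk hy hz e
  exact h k z y hk hz hy (by linarith)

theorem GlueN.symm {a b c : ℕ} (h : GlueN a b c) : GlueN a c b := by
  obtain ⟨y, z, h⟩ := h
  exact ⟨z, y, by rw [Nat.gcd_comm, h]; ring⟩

theorem Gap.symm {a b c : ℕ} (h : Gap a b c) : Gap a c b := by
  obtain ⟨n, p, q, r, hp, hq, hr, e, h1, h2, h3⟩ := h
  refine ⟨n, p, r, q, hp, hr, hq, by omega, h2, h1, ?_⟩
  intro y z hy hz h
  exact h3 z y hz hy (by omega)

theorem dvd_of_cop {a b c n : ℕ} (hg : Nat.gcd a (Nat.gcd b c) = 1)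
    (h : Nat.gcd b c ∣ n * a) : Nat.gcd b c ∣ n := by
  have : Nat.Coprime (Nat.gcd b c) a := by
    rw [Nat.coprime_comm]; exact hg
  exact this.dvd_of_dvd_mul_right h

/-- If `m1 a = m2 b` for the minimal multipliers then `c` is glued. -/
theorem glue_of_eq {a b c m1 m2 m3 : ℕ} {y z : ℕ} (h1p : 0 < m1)
    (h1 : MinRel a b c m1) (h3p : 0 < m3) (h3 : MinRel c a b m3)
    (e3 : m3 * c = y * a + z * b) (e : m1 * a = m2 * b) : GlueN c a b := by
  have key : ∀ p q r : ℤ, p * a + q * b + r * c = 0 → (m3 : ℤ) ∣ r := by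
    intro p q r hr
    rw [Int.dvd_iff_emod_eq_zero]
    by_contra hne
    have h3p' : (0 : ℤ) < m3 := by exact_mod_cast h3p
    have h1p' : (0 : ℤ) < m1 := by exact_mod_cast h1p
    have e3' : (m3 : ℤ) * c = y * a + z * b := by exact_mod_cast e3
    have e' : (m1 : ℤ) * a = m2 * b := by exact_mod_cast e
    have r0 := Int.emod_nonneg r h3p'.ne'
    have r1 := Int.emod_lt_of_pos r h3p'
    have rd := Int.emod_add_mul_ediv r m3
    set r' := r % (m3 : ℤ)
    set t := r / (m3 : ℤ)
    set P := p + t * y with hP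
    have s0 := Int.emod_nonneg (-P) h1p'.ne'
    have s1 := Int.emod_lt_of_pos (-P) h1p'
    have sd := Int.emod_add_mul_ediv (-P) m1
    set s := (-P) % (m1 : ℤ)
    set w := (-P) / (m1 : ℤ)
    have hs : P = -s - m1 * w := by linarith
    have rel : (s : ℤ) * a = (q + t * z - w * m2) * b + r' * c := by
      have : r = r' + m3 * t := by linarith
      have hp : p = -s - m1 * w - t * y := by linarith
      rw [this, hp] at hr
      linear_combination (-1 : ℤ) * hr + t * e3' - w * e'
    rcases le_or_gt (q + t * z - w * m2) 0 with hq | hq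
    · have := h3 r' s (-(q + t * z - w * m2)) (by omega) s0 (by omega) (by linarith)
      omega
    · have hs0 : 0 < s := by
        rcases s0.lt_or_eq with h | h
        · exact h
        · exfalso
          rw [← h] at rel
          have hb : (0 : ℤ) ≤ b := by positivity
          have hc : (0 : ℤ) ≤ c := by positivity
          have hb0 : (0 : ℤ) ≤ (q + t * z - w * m2) * b := by positivity
          have hc0 : (0 : ℤ) ≤ r' * c := by positivity
          have hc1 : r' * (c : ℤ) = 0 := by linarith
          have := h3 r' 0 0 (by omega) le_rfl le_rfl (by linarith)
          omega
      have := h1 s _ r' hs0 hq.le r0 rel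
      omega
  have hbz := Nat.gcd_eq_gcd_ab a b
  have := key (c * Nat.gcdA a b) (c * Nat.gcdB a b) (-(Nat.gcd a b : ℤ)) (by
    rw [hbz]; ring)
  rw [dvd_neg] at this
  have hd : m3 ∣ Nat.gcd a b := by exact_mod_cast this
  obtain ⟨m, hm⟩ := hd
  refine ⟨m * y, m * z, ?_⟩
  rw [hm]
  calc m3 * m * c = m * (m3 * c) := by ring
    _ = _ := by rw [e3]; ring

/-- step: from `m1 a = α b` either gluing or `m2 b = r c`. -/
theorem step {a b c m1 m2 m3 α y z y2 z2 : ℕ} (hb : 0 < b)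
    (h1p : 0 < m1) (h2p : 0 < m2) (h3p : 0 < m3)
    (h1 : MinRel a b c m1) (h2 : MinRel b a c m2) (h3 : MinRel c a b m3)
    (e2 : m2 * b = y2 * a + z2 * c)
    (e3 : m3 * c = y * a + z * b) (e : m1 * a = α * b) (hg : ¬ GlueN c a b) :
    m2 < α ∧ m2 * b = z2 * c := by
  have ha : 0 < α := by
    rcases Nat.eq_zero_or_pos α with h | h
    · exfalso
      subst h
      have ha0 : a = 0 := by
        rcases Nat.mul_eq_zero.1 (by rw [e]; simp) with h | h
        · omega
        · exact h
      subst ha0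
      exact hg (glue_of_eq (m2 := 0) h1p h1 h3p h3 e3 (by simp))
    · exact h
  have hle : m2 ≤ α := by
    have := h2 α m1 0 (by exact_mod_cast ha) (by positivity) le_rfl (by rw [zero_mul, add_zero]; exact_mod_cast e.symm)
    exact_mod_cast this
  have hne : m2 ≠ α := by
    rintro rfl
    exact hg (glue_of_eq h1p h1 h3p h3 e3 e)
  have hlt : m2 < α := by omega
  refine ⟨hlt, ?_⟩
  suffices y2 = 0 by subst this; simpa using e2
  by_contra hy
  have hy' : 0 < y2 := Nat.pos_of_ne_zero hy
  zify at e2 e hlt hy' hb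
  have rel : ((m1 : ℤ) - y2) * a = (α - m2) * b + z2 * c := by linear_combination e + e2
  have hpos : (0 : ℤ) < m1 - y2 := by
    by_contra hn
    have ha' : (0 : ℤ) ≤ a := by positivity
    have : (0 : ℤ) < (α - m2) * b := mul_pos (by linarith) hb
    have hc : (0 : ℤ) ≤ z2 * c := by positivity
    nlinarith
  have := h1 _ _ _ hpos (by linarith) (by positivity) rel
  linarith

/-- no gluing: minimal relations are not two-term. -/
theorem no_two {a b c m1 m2 m3 α x1 x2 y1 y2 z1 z2 : ℕ} (ha : 0 < a) (hb : 0 < b) (hc : 0 < c)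
    (h1p : 0 < m1) (h2p : 0 < m2) (h3p : 0 < m3)
    (h1 : MinRel a b c m1) (h2 : MinRel b a c m2) (h3 : MinRel c a b m3)
    (e1 : m1 * a = x1 * b + x2 * c) (e2 : m2 * b = y1 * a + y2 * c)
    (e3 : m3 * c = z1 * a + z2 * b)
    (g1 : ¬ GlueN a b c) (g2 : ¬ GlueN b a c) (g3 : ¬ GlueN c a b) : m1 * a ≠ α * b := by
  intro e
  obtain ⟨l1, f1⟩ := step hb h1p h2p h3p h1 h2 h3 e2 e3 e g3
  obtain ⟨l2, f2⟩ := step (a := b) (b := c) (c := a) (m1 := m2) (m2 := m3) (m3 := m1)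
    (y2 := z2) (z2 := z1) hc h2p h3p h1p h2.symm h3.symm h1 (by rw [e3]; ring) e1 f1 g1
  have l3 : m1 ≤ z1 := by
    have hz : 0 < z1 := by
      rcases Nat.eq_zero_or_pos z1 with h | h
      · subst h
        have : 0 < m3 * c := by positivity
        omega
      · exact h
    have := h1 z1 0 m3 (by exact_mod_cast hz) le_rfl (by positivity)
      (by rw [zero_mul, zero_add]; exact_mod_cast f2.symm)
    exact_mod_cast this
  have q1 : m2 * b < m1 * a := by rw [e]; exact Nat.mul_lt_mul_of_pos_right l1 hb
  have q2 : m3 * c < m2 * b := by rw [f1]; exact Nat.mul_lt_mul_of_pos_right l2 hc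
  have q3 : m1 * a ≤ m3 * c := by rw [f2]; exact Nat.mul_le_mul_right _ l3
  omega

/-- bound on the coefficients of minimal relations -/
theorem coef_lt {a b c m1 m2 r12 r13 r21 r23 : ℤ} (ha : 0 < a) (hb : 0 < b) (hc : 0 < c)
    (h1 : MinRel a b c m1) (p13 : 0 < r13) (p21 : 0 < r21) (p23 : 0 < r23)
    (e1 : m1 * a = r12 * b + r13 * c) (e2 : m2 * b = r21 * a + r23 * c) : r12 < m2 := by
  by_contra hn
  have rel : (m1 - r21) * a = (r12 - m2) * b + (r13 + r23) * c := by linear_combination e1 + e2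
  have hpos : 0 < m1 - r21 := by
    by_contra hx
    have q1 : 0 ≤ (r12 - m2) * b := mul_nonneg (by linarith) hb.le
    have q2 : 0 < (r13 + r23) * c := by positivity
    nlinarith
  have := h1 _ _ _ hpos (by linarith) (by linarith) rel
  linarith

/-- a relation with all coefficients small vanishes -/
theorem rel_zero {a b c m1 m2 m3 p q r : ℤ} (ha : 0 < a) (hb : 0 < b) (hc : 0 < c)
    (h1 : MinRel a b c m1) (h2 : MinRel b a c m2) (h3 : MinRel c a b m3)
    (e : p * a + q * b + r * c = 0)
    (p1 : -m1 < p) (p2 : p < m1) (q1 : -m2 < q) (q2 : q < m2) (r1 : -m3 < r) (r2 : r < m3) :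
    p = 0 ∧ q = 0 ∧ r = 0 := by
  have sg : ∀ x y : ℤ, 0 < y → (x < 0 ∧ x * y < 0) ∨ (x = 0 ∧ x * y = 0) ∨ (0 < x ∧ 0 < x * y) := by
    intro x y hy
    rcases lt_trichotomy x 0 with h | h | h
    · exact Or.inl ⟨h, mul_neg_of_neg_of_pos h hy⟩
    · exact Or.inr (Or.inl ⟨h, by rw [h, zero_mul]⟩)
    · exact Or.inr (Or.inr ⟨h, mul_pos h hy⟩)
  rcases sg p a ha with ⟨hp, hp'⟩ | ⟨hp, hp'⟩ | ⟨hp, hp'⟩ <;>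
    rcases sg q b hb with ⟨hq, hq'⟩ | ⟨hq, hq'⟩ | ⟨hq, hq'⟩ <;>
    rcases sg r c hc with ⟨hr, hr'⟩ | ⟨hr, hr'⟩ | ⟨hr, hr'⟩ <;> first
    | exact ⟨hp, hq, hr⟩
    | (exfalso; linarith)
    | (exfalso; have := h1 p (-q) (-r) (by omega) (by omega) (by omega) (by linarith); omega)
    | (exfalso; have := h1 (-p) q r (by omega) (by omega) (by omega) (by linarith); omega)
    | (exfalso; have := h2 q (-p) (-r) (by omega) (by omega) (by omega) (by linarith); omega)
    | (exfalso; have := h2 (-q) p r (by omega) (by omega) (by omega) (by linarith); omega)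
    | (exfalso; have := h3 r (-p) (-q) (by omega) (by omega) (by omega) (by linarith); omega)
    | (exfalso; have := h3 (-r) p q (by omega) (by omega) (by omega) (by linarith); omega)

/-- half of the failure analysis -/
theorem fail_half {a b c m1 m2 m3 r12 r13 r31 r32 s t : ℤ}
    (ha : 0 < a) (hb : 0 < b) (hc : 0 < c)
    (h1 : MinRel a b c m1) (h2 : MinRel b a c m2) (h3 : MinRel c a b m3)
    (p1 : 1 < m1) (p3 : 0 < m3) (p31 : 0 < r31) (p32 : 0 < r32) (l31 : r31 < m1) (l32 : r32 < m2)
    (l12 : r12 < m2)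
    (e1 : m1 * a = r12 * b + r13 * c) (e3 : m3 * c = r31 * a + r32 * b)
    (hs : 0 < s) (hs' : s < r12)
    (e : (m1 + 1) * a = s * b + t * c) : r31 = 1 ∧ r32 < r12 := by
  have rel : (t - r13) * c = 1 * a + (r12 - s) * b := by linear_combination e1 - e
  have hpos : 0 < t - r13 := by
    by_contra hx
    have : 0 < (r12 - s) * b := mul_pos (by linarith) hb
    nlinarith
  have hm := h3 _ _ _ hpos (by norm_num) (by linarith) rel
  have rel2 : (r12 - s - r32) * b = (r31 - 1) * a + (t - r13 - m3) * c := by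
    linear_combination e3 - rel
  rcases hm.lt_or_eq with hlt | heq
  · exfalso
    have q1 : 0 ≤ (r31 - 1) * a := mul_nonneg (by linarith) ha.le
    have q2 : 0 < (t - r13 - m3) * c := mul_pos (by linarith) hc
    have hp : 0 < r12 - s - r32 := by
      by_contra hx
      nlinarith
    have := h2 _ _ _ hp (by linarith) (by linarith) rel2
    linarith
  · obtain ⟨h, h', -⟩ := rel_zero (p := r31 - 1) (q := -(r12 - s - r32)) (r := 0) ha hb hc h1 h2 h3
      (by rw [← heq] at rel2; linear_combination -rel2)
      (by linarith) (by linarith) (by linarith) (by linarith) (by linarith) (by linarith)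
    constructor <;> linarith

theorem fail_imp {a b c m1 m2 m3 r12 r13 r21 r23 r31 r32 s t : ℤ}
    (ha : 0 < a) (hb : 0 < b) (hc : 0 < c)
    (h1 : MinRel a b c m1) (h2 : MinRel b a c m2) (h3 : MinRel c a b m3)
    (hmin : ∀ y z : ℤ, 0 ≤ y → 0 ≤ z → a ≠ y * b + z * c)
    (p1 : 1 < m1) (p2 : 0 < m2) (p3 : 0 < m3) (p21 : 0 < r21) (p23 : 0 < r23)
    (p31 : 0 < r31) (p32 : 0 < r32)
    (l12 : r12 < m2) (l13 : r13 < m3) (l21 : r21 < m1) (l23 : r23 < m3)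
    (l31 : r31 < m1) (l32 : r32 < m2)
    (e1 : m1 * a = r12 * b + r13 * c) (e2 : m2 * b = r21 * a + r23 * c)
    (e3 : m3 * c = r31 * a + r32 * b)
    (hs : 0 < s) (ht : 0 < t)
    (e : (m1 + 1) * a = s * b + t * c) :
    (r31 = 1 ∧ r32 < r12) ∨ (r21 = 1 ∧ r23 < r13) := by
  by_cases h : s < r12
  · exact Or.inl (fail_half ha hb hc h1 h2 h3 p1 p3 p31 p32 l31 l32 l12 e1 e3 hs h e)
  · by_cases h' : t < r13
    · exact Or.inr (fail_half (b := c) (c := b) (r13 := r12) (s := t) (t := s) ha hc hb h1.symm h3 h2 p1 p2 p21 p23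
        l21 l23 l13 (by linarith) e2 ht h' (by linarith))
    · exact absurd (by linear_combination e - e1) (hmin (s - r12) (t - r13) (by linarith) (by linarith))

/-- no gap for `a` yields a bad relation, when there are no two-term relations. -/
theorem fail_of_not_gap {a b c m r s : ℕ} (ha : 0 < a) (hb : 0 < b) (hc : 0 < c)
    (h : MinRel a b c m) (e : m * a = r * b + s * c)
    (hr : 0 < r) (hs : 0 < s)
    (n1 : ∀ α, m * a ≠ α * b) (n2 : ∀ α, m * a ≠ α * c) (hg : ¬ Gap a b c) :
    ∃ s t : ℤ, 0 < s ∧ 0 < t ∧ ((m : ℤ) + 1) * a = s * b + t * c := by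
  by_contra hcon
  push Not at hcon
  apply hg
  refine ⟨m + 1, 1, r, s, one_pos, hr, hs, by rw [add_mul, e]; ring, ?_, ?_, ?_⟩
  · intro y z hy hz e'
    have hlt : y ≤ m := by
      by_contra hx
      have : (m + 1) * a ≤ y * a := Nat.mul_le_mul_right _ (by omega)
      have : 0 < z * b := by positivity
      omega
    have e'' : ((m : ℤ) + 1 - y) * a = z * b + 0 * c := by zify at e'; linear_combination e'
    have := h _ _ _ (by omega) (by positivity) le_rfl e''
    have hy1 : y = 1 := by omega
    subst hy1
    exact n1 z (by linarith)
  · intro y z hy hz e'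
    have hlt : y ≤ m := by
      by_contra hx
      have : (m + 1) * a ≤ y * a := Nat.mul_le_mul_right _ (by omega)
      have : 0 < z * c := by positivity
      omega
    have e'' : ((m : ℤ) + 1 - y) * a = 0 * b + z * c := by zify at e'; linear_combination e'
    have := h _ _ _ (by omega) le_rfl (by positivity) e''
    have hy1 : y = 1 := by omega
    subst hy1
    exact n2 z (by linarith)
  · intro y z hy hz e'
    exact hcon y z (by exact_mod_cast hy) (by exact_mod_cast hz) (by exact_mod_cast e')

theorem pos_pos_of {m a r s b c : ℕ} (e : m * a = r * b + s * c)
    (n1 : ∀ α, m * a ≠ α * b) (n2 : ∀ α, m * a ≠ α * c) : 0 < r ∧ 0 < s := by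
  constructor
  · rcases Nat.eq_zero_or_pos r with h | h
    · subst h; exact absurd (by simpa using e) (n2 s)
    · exact h
  · rcases Nat.eq_zero_or_pos s with h | h
    · subst h; exact absurd (by simpa using e) (n1 r)
    · exact h

theorem one_lt_of {m a r s b c : ℕ} (hp : 0 < m) (e : m * a = r * b + s * c)
    (hmin : ∀ y z : ℕ, a ≠ y * b + z * c) : 1 < m := by
  by_contra h
  have : m = 1 := by omega
  subst this
  exact hmin r s (by linarith)

theorem min_int {a b c : ℕ} (hmin : ∀ y z : ℕ, a ≠ y * b + z * c) :
    ∀ y z : ℤ, 0 ≤ y → 0 ≤ z → (a : ℤ) ≠ y * b + z * c := by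
  intro y z hy hz
  lift y to ℕ using hy
  lift z to ℕ using hz
  exact_mod_cast hmin y z

theorem gap_of_no_glue {a b c : ℕ} (ha : 0 < a) (hb : 0 < b) (hc : 0 < c)
    (ma : ∀ y z : ℕ, a ≠ y * b + z * c) (mb : ∀ y z : ℕ, b ≠ y * a + z * c)
    (mc : ∀ y z : ℕ, c ≠ y * a + z * b)
    (g1 : ¬ GlueN a b c) (g2 : ¬ GlueN b a c) (g3 : ¬ GlueN c a b) :
    Gap a b c ∨ Gap b a c ∨ Gap c a b := by
  by_contra hcon
  push Not at hcon
  obtain ⟨k1, k2, k3⟩ := hcon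
  obtain ⟨m1, r12, r13, h1p, e1, h1⟩ := exists_min a b c ha hb
  obtain ⟨m2, r21, r23, h2p, e2, h2⟩ := exists_min b a c hb ha
  obtain ⟨m3, r31, r32, h3p, e3, h3⟩ := exists_min c a b hc ha
  have e1' : m1 * a = r13 * c + r12 * b := by linarith
  have e2' : m2 * b = r23 * c + r21 * a := by linarith
  have e3' : m3 * c = r32 * b + r31 * a := by linarith
  have g1' : ¬ GlueN a c b := fun h => g1 h.symm
  have g2' : ¬ GlueN b c a := fun h => g2 h.symm
  have g3' : ¬ GlueN c b a := fun h => g3 h.symm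
  have nab : ∀ α, m1 * a ≠ α * b := fun α =>
    no_two ha hb hc h1p h2p h3p h1 h2 h3 e1 e2 e3 g1 g2 g3
  have nac : ∀ α, m1 * a ≠ α * c := fun α =>
    no_two ha hc hb h1p h3p h2p h1.symm h3 h2 e1' e3 e2 g1' g3 g2
  have nba : ∀ α, m2 * b ≠ α * a := fun α =>
    no_two hb ha hc h2p h1p h3p h2 h1 h3.symm e2 e1 e3' g2 g1 g3'
  have nbc : ∀ α, m2 * b ≠ α * c := fun α =>
    no_two hb hc ha h2p h3p h1p h2.symm h3.symm h1 e2' e3' e1 g2' g3' g1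
  have nca : ∀ α, m3 * c ≠ α * a := fun α =>
    no_two hc ha hb h3p h1p h2p h3 h1.symm h2.symm e3 e1' e2' g3 g1' g2'
  have ncb : ∀ α, m3 * c ≠ α * b := fun α =>
    no_two hc hb ha h3p h2p h1p h3.symm h2.symm h1.symm e3' e2' e1' g3' g2' g1'
  obtain ⟨p12, p13⟩ := pos_pos_of e1 nab nac
  obtain ⟨p21, p23⟩ := pos_pos_of e2 nba nbc
  obtain ⟨p31, p32⟩ := pos_pos_of e3 nca ncb
  have o1 := one_lt_of h1p e1 ma
  have o2 := one_lt_of h2p e2 mb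
  have o3 := one_lt_of h3p e3 mc
  obtain ⟨s1, t1, hs1, ht1, f1⟩ := fail_of_not_gap ha hb hc h1 e1 p12 p13 nab nac k1
  obtain ⟨s2, t2, hs2, ht2, f2⟩ := fail_of_not_gap hb ha hc h2 e2 p21 p23 nba nbc k2
  obtain ⟨s3, t3, hs3, ht3, f3⟩ := fail_of_not_gap hc ha hb h3 e3 p31 p32 nca ncb k3
  have Ma := min_int ma
  have Mb := min_int mb
  have Mc := min_int mc
  zify at *
  have l12 := coef_lt ha hb hc h1 p13 p21 p23 e1 e2
  have l13 := coef_lt ha hc hb h1.symm p12 p31 p32 e1' e3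
  have l21 := coef_lt hb ha hc h2 p23 p12 p13 e2 e1
  have l23 := coef_lt hb hc ha h2.symm p21 p32 p31 e2' e3'
  have l31 := coef_lt hc ha hb h3 p32 p13 p12 e3 e1'
  have l32 := coef_lt hc hb ha h3.symm p31 p23 p21 e3' e2'
  have F1 := fail_imp ha hb hc h1 h2 h3 Ma o1 h2p h3p p21 p23 p31 p32 l12 l13 l21 l23 l31 l32
    e1 e2 e3 hs1 ht1 f1
  have F2 := fail_imp hb ha hc h2 h1 h3.symm Mb o2 h1p h3p p12 p13 p32 p31 l21 l23 l12 l13 l32 l31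
    e2 e1 e3' hs2 ht2 f2
  have F3 := fail_imp hc ha hb h3 h1.symm h2.symm Mc o3 h1p h2p p13 p12 p23 p21 l31 l32 l13 l12
    l23 l21 e3 e1' e2' hs3 ht3 f3
  omega

/-- a single gluing: either a gap or a second gluing. -/
theorem gap_of_glue {a b c : ℕ} (ha : 0 < a) (hb : 0 < b) (hc : 0 < c)
    (hg : Nat.gcd a (Nat.gcd b c) = 1) (ma : ∀ y z : ℕ, a ≠ y * b + z * c)
    (h : GlueN a b c) : Gap a b c ∨ GlueN b a c ∨ GlueN c a b := by
  obtain ⟨y, z, e⟩ := h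
  set d := Nat.gcd b c with hd
  have hdb : d ∣ b := Nat.gcd_dvd_left _ _
  have hdc : d ∣ c := Nat.gcd_dvd_right _ _
  have hd0 : 0 < d := Nat.gcd_pos_of_pos_left _ hb
  have hd1 : 1 < d := by
    by_contra hx
    have : d = 1 := by omega
    rw [this] at e
    exact ma y z (by linarith)
  have cop : ∀ n, d ∣ n * a → d ∣ n := fun n hn => dvd_of_cop hg hn
  -- a two-term relation `d * a = α * b` gives gluing at `c`
  by_cases t1 : ∃ α, d * a = α * b
  · right; right
    obtain ⟨α, t1⟩ := t1
    have : b ∣ Nat.gcd a b * c := by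
      rw [← Nat.gcd_mul_right]
      refine Nat.dvd_gcd ?_ (dvd_mul_right _ _)
      obtain ⟨w, hw⟩ := hdc
      refine ⟨α * w, ?_⟩
      rw [hw]
      linear_combination w * t1
    obtain ⟨w, hw⟩ := this
    exact ⟨0, w, by rw [hw]; ring⟩
  by_cases t2 : ∃ α, d * a = α * c
  · right; left
    obtain ⟨α, t2⟩ := t2
    have : c ∣ Nat.gcd a c * b := by
      rw [← Nat.gcd_mul_right]
      refine Nat.dvd_gcd ?_ (dvd_mul_right _ _)
      obtain ⟨w, hw⟩ := hdb
      refine ⟨α * w, ?_⟩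
      rw [hw]
      linear_combination w * t2
    obtain ⟨w, hw⟩ := this
    exact ⟨0, w, by rw [hw]; ring⟩
  left
  push Not at t1 t2
  obtain ⟨py, pz⟩ := pos_pos_of e t1 t2
  have aux : ∀ y w, 0 < y → 0 < w → d ∣ w → (d + 1) * a = y * a + w → d * a = w := by
    intro y w hy hw hdw e'
    have hle : y ≤ d := by
      by_contra hx
      have : (d + 1) * a ≤ y * a := Nat.mul_le_mul_right _ (by omega)
      omega
    have e2 : (d + 1 - y) * a = w := by
      rw [Nat.sub_mul]; omega
    have : d ∣ d + 1 - y := cop _ (e2 ▸ hdw)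
    have := Nat.le_of_dvd (by omega) this
    have : y = 1 := by omega
    subst this
    linarith
  refine ⟨d + 1, 1, y, z, one_pos, py, pz, by rw [add_mul, e]; ring, ?_, ?_, ?_⟩
  · intro y z hy hz e'
    exact t1 z (aux y _ hy (by positivity) (hdb.mul_left _) e')
  · intro y z hy hz e'
    exact t2 z (aux y _ hy (by positivity) (hdc.mul_left _) e')
  · intro y z hy hz e'
    have h1 : d ∣ d + 1 := cop _ (e' ▸ dvd_add (hdb.mul_left _) (hdc.mul_left _))
    have : d ∣ 1 := (Nat.dvd_add_right (dvd_refl d)).1 h1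
    have := Nat.le_of_dvd one_pos this
    omega

/-- pivot form of a double gluing -/
def Piv (p q r : ℕ) : Prop := p ∣ Nat.gcd p r * q ∧ p ∣ Nat.gcd p q * r

theorem piv_of_two {a b c : ℕ} (ha : 0 < a) (hb : 0 < b) (hc : 0 < c)
    (hg : Nat.gcd a (Nat.gcd b c) = 1) (h1 : GlueN a b c) (h2 : GlueN b a c) :
    Piv a b c ∨ Piv b a c ∨ Piv c a b := by
  have hg2 : Nat.gcd b (Nat.gcd a c) = 1 := by
    rw [← hg, ← Nat.gcd_assoc, ← Nat.gcd_assoc, Nat.gcd_comm b a]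
  obtain ⟨α, β, e1⟩ := h1
  obtain ⟨γ, δ, e2⟩ := h2
  have c1 : ∀ n, Nat.gcd b c ∣ n * a → Nat.gcd b c ∣ n := fun n hn => dvd_of_cop hg hn
  have c2 : ∀ n, Nat.gcd a c ∣ n * b → Nat.gcd a c ∣ n := fun n hn => dvd_of_cop hg2 hn
  have k1b : Nat.gcd b c ∣ b := Nat.gcd_dvd_left _ _
  have k1c : Nat.gcd b c ∣ c := Nat.gcd_dvd_right _ _
  have k2a : Nat.gcd a c ∣ a := Nat.gcd_dvd_left _ _
  have k2c : Nat.gcd a c ∣ c := Nat.gcd_dvd_right _ _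
  rcases Nat.eq_zero_or_pos α with h0 | hα
  · right; right
    have e1' : Nat.gcd b c * a = β * c := by rw [e1, h0]; ring
    have hc1 : c ∣ Nat.gcd b c * a := ⟨β, by rw [e1']; ring⟩
    refine ⟨by rwa [Nat.gcd_comm c b], ?_⟩
    rw [← Nat.gcd_mul_right]
    refine Nat.dvd_gcd (dvd_mul_right _ _) ?_
    rw [mul_comm a b]
    exact hc1.trans (mul_dvd_mul_right k1b a)
  rcases Nat.eq_zero_or_pos γ with h0 | hγ
  · right; right
    have e2' : Nat.gcd a c * b = δ * c := by rw [e2, h0]; ring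
    have hc1 : c ∣ Nat.gcd a c * b := ⟨δ, by rw [e2']; ring⟩
    refine ⟨?_, by rwa [Nat.gcd_comm c a]⟩
    rw [← Nat.gcd_mul_right]
    refine Nat.dvd_gcd (dvd_mul_right _ _) ?_
    rw [mul_comm b a]
    exact hc1.trans (mul_dvd_mul_right k2a b)
  have d2 : Nat.gcd a c ∣ α := by
    apply c2
    exact (Nat.dvd_add_left (k2c.mul_left β)).1 (e1 ▸ k2a.mul_left _)
  have d1 : Nat.gcd b c ∣ γ := by
    apply c1
    exact (Nat.dvd_add_left (k1c.mul_left δ)).1 (e2 ▸ k1b.mul_left _)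
  have i1 := Nat.mul_le_mul_right b (Nat.le_of_dvd hα d2)
  have i2 := Nat.mul_le_mul_right a (Nat.le_of_dvd hγ d1)
  have eq : Nat.gcd b c * a = Nat.gcd a c * b := by omega
  left
  refine ⟨⟨Nat.gcd b c, by rw [← eq]; ring⟩, ?_⟩
  rw [← Nat.gcd_mul_right]
  refine Nat.dvd_gcd (dvd_mul_right _ _) ?_
  have : a ∣ Nat.gcd a c * b := ⟨Nat.gcd b c, by rw [← eq]; ring⟩
  rw [mul_comm b c]
  exact this.trans (mul_dvd_mul_right k2c b)

/-- support-two factorization -/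
def Two (a b c x : ℕ) : Prop := ∃ y z : ℕ, 0 < y ∧ 0 < z ∧
  (x = y * a + z * b ∨ x = y * a + z * c ∨ x = y * b + z * c)

theorem two_of_piv {p q r x u v w : ℕ} (hg : Nat.gcd p (Nat.gcd q r) = 1) (h : Piv p q r)
    (hu : 0 < u) (hv : 0 < v) (hw : 0 < w) (e : x = u * p + v * q + w * r)
    (hx : p ∣ x ∨ q ∣ x ∨ r ∣ x) : Two p q r x := by
  have hgq : Nat.gcd q (Nat.gcd p r) = 1 := by
    rw [← hg, ← Nat.gcd_assoc, ← Nat.gcd_assoc, Nat.gcd_comm p q]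
  have hgr : Nat.gcd r (Nat.gcd p q) = 1 := by
    rw [← hg, Nat.gcd_comm r, Nat.gcd_assoc]
  obtain ⟨h1, h2⟩ := h
  have A : Nat.gcd p r ∣ x → Two p q r x := by
    intro hd
    have : Nat.gcd p r ∣ v := by
      apply dvd_of_cop hgq
      have k1 : Nat.gcd p r ∣ u * p := (Nat.gcd_dvd_left _ _).mul_left _
      have k2 : Nat.gcd p r ∣ w * r := (Nat.gcd_dvd_right _ _).mul_left _
      rw [e] at hd
      exact (Nat.dvd_add_right k1).1 ((Nat.dvd_add_left k2).1 hd)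
    obtain ⟨m, hm⟩ := h1
    obtain ⟨n, hn⟩ := this
    refine ⟨u + n * m, w, by omega, hw, Or.inr (Or.inl ?_)⟩
    have : v * q = n * m * p := by rw [hn]; linear_combination n * hm
    rw [e, this]; ring
  have B : Nat.gcd p q ∣ x → Two p q r x := by
    intro hd
    have : Nat.gcd p q ∣ w := by
      apply dvd_of_cop hgr
      have k1 : Nat.gcd p q ∣ u * p := (Nat.gcd_dvd_left _ _).mul_left _
      have k2 : Nat.gcd p q ∣ v * q := (Nat.gcd_dvd_right _ _).mul_left _
      rw [e] at hd
      exact (Nat.dvd_add_right (dvd_add k1 k2)).1 hd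
    obtain ⟨m, hm⟩ := h2
    obtain ⟨n, hn⟩ := this
    refine ⟨u + n * m, v, by omega, hv, Or.inl ?_⟩
    have : w * r = n * m * p := by rw [hn]; linear_combination n * hm
    rw [e, this]; ring
  rcases hx with h | h | h
  · exact A ((Nat.gcd_dvd_left _ _).trans h)
  · exact B ((Nat.gcd_dvd_right _ _).trans h)
  · exact A ((Nat.gcd_dvd_right _ _).trans h)

/-! Transfer to `Fin 3`. -/

theorem sum3 {i j k : Fin 3} (hij : i ≠ j) (hik : i ≠ k) (hjk : j ≠ k) (f : Fin 3 → ℕ) :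
    ∑ t, f t = f i + f j + f k := by
  have : (Finset.univ : Finset (Fin 3)) = {i, j, k} := by
    revert i j k; decide
  rw [this, Finset.sum_insert (by simp [hij, hik]), Finset.sum_insert (by simp [hjk]),
    Finset.sum_singleton, add_assoc]

theorem lzero3 {i j k : Fin 3} (hij : i ≠ j) (hik : i ≠ k) (hjk : j ≠ k) (z : Fin 3 → ℕ) :
    lzero z = (if z i ≠ 0 then 1 else 0) + (if z j ≠ 0 then 1 else 0)
      + (if z k ≠ 0 then 1 else 0) := by
  unfold lzero
  rw [Finset.card_filter, sum3 hij hik hjk]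

/-- vector with prescribed coordinates -/
def vec (i j : Fin 3) (p q r : ℕ) : Fin 3 → ℕ :=
  fun t => if t = i then p else if t = j then q else r

theorem vec_mem {i j k : Fin 3} (hij : i ≠ j) (hik : i ≠ k) (hjk : j ≠ k) (a : Fin 3 → ℕ)
    (p q r : ℕ) : vec i j p q r ∈ Zfac a (p * a i + q * a j + r * a k) := by
  show ∑ t, _ = _
  rw [sum3 hij hik hjk]
  simp [vec, hij.symm, hik.symm, hjk.symm]

theorem mem_L {i j k : Fin 3} (hij : i ≠ j) (hik : i ≠ k) (hjk : j ≠ k) (a : Fin 3 → ℕ)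
    (x l : ℕ) : l ∈ LzeroSet a x ↔ ∃ p q r : ℕ, x = p * a i + q * a j + r * a k ∧
      l = (if p ≠ 0 then 1 else 0) + (if q ≠ 0 then 1 else 0) + (if r ≠ 0 then 1 else 0) := by
  constructor
  · rintro ⟨z, hz, rfl⟩
    refine ⟨z i, z j, z k, ?_, lzero3 hij hik hjk z⟩
    rw [← sum3 hij hik hjk (fun t => z t * a t)]
    exact hz.symm
  · rintro ⟨p, q, r, rfl, rfl⟩
    refine ⟨_, vec_mem hij hik hjk a p q r, ?_⟩
    rw [lzero3 hij hik hjk]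
    simp [vec, hij.symm, hik.symm, hjk.symm]

theorem two_mem_of_gap {i j k : Fin 3} (hij : i ≠ j) (hik : i ≠ k) (hjk : j ≠ k) (a : Fin 3 → ℕ)
    (hp : ∀ i, 0 < a i) (h : Gap (a i) (a j) (a k)) : 2 ∈ DeltaZeroS a := by
  obtain ⟨n, p, q, r, h1, h2, h3, e, n1, n2, n3⟩ := h
  have hn : 0 < n := by
    rcases Nat.eq_zero_or_pos n with h | h
    · subst h
      have : 0 < p * a i := Nat.mul_pos h1 (hp i)
      omega
    · exact h
  refine Set.mem_iUnion.2 ⟨n * a i, 1, ?_, 3, ?_, by norm_num, rfl, ?_⟩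
  · rw [mem_L hij hik hjk]
    exact ⟨n, 0, 0, by simp, by simp [hn.ne']⟩
  · rw [mem_L hij hik hjk]
    exact ⟨p, q, r, e, by simp [h1.ne', h2.ne', h3.ne']⟩
  · rintro t ht ⟨t1, t2⟩
    rw [mem_L hij hik hjk] at ht
    obtain ⟨u, v, w, e', ht⟩ := ht
    rcases Nat.eq_zero_or_pos u with hu | hu <;> rcases Nat.eq_zero_or_pos v with hv | hv <;>
      rcases Nat.eq_zero_or_pos w with hw | hw <;>
      (try simp only [Nat.pos_iff_ne_zero] at hu hv hw) <;>
      simp only [hu, hv, hw, ne_eq, not_true, not_false_iff, if_true, if_false] at ht <;>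
      (try simp only [← Nat.pos_iff_ne_zero] at hu hv hw) <;>
      first
      | omega
      | (subst hw; exact n1 u v hu hv (by simpa using e'))
      | (subst hv; exact n2 u w hu hw (by simpa using e'))
      | (subst hu; exact n3 v w hv hw (by simpa using e'))

theorem two_not_mem {i j k : Fin 3} (hij : i ≠ j) (hik : i ≠ k) (hjk : j ≠ k) (a : Fin 3 → ℕ)
    (hp : ∀ i, 0 < a i) (hg : Nat.gcd (a i) (Nat.gcd (a j) (a k)) = 1)
    (h : Piv (a i) (a j) (a k)) : 2 ∉ DeltaZeroS a := by
  intro hm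
  obtain ⟨x, u, hu, v, hv, huv, hd, hno⟩ := Set.mem_iUnion.1 hm
  rw [mem_L hij hik hjk] at hu hv
  obtain ⟨p, q, r, e, hu⟩ := hu
  obtain ⟨p', q', r', e', hv⟩ := hv
  have hv3 : v ≤ 3 := by rw [hv]; split_ifs <;> omega
  have hu0 : u ≠ 0 := by
    intro h0
    have hpp : p = 0 ∧ q = 0 ∧ r = 0 := by
      rw [h0] at hu
      refine ⟨?_, ?_, ?_⟩ <;> by_contra hx <;> simp [hx] at hu <;> omega
    obtain ⟨rfl, rfl, rfl⟩ := hpp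
    have hx : x = 0 := by simpa using e
    rw [hx] at e'
    have hi := hp i
    have hj := hp j
    have hk := hp k
    have a1 : p' = 0 := by
      by_contra hx
      have : 0 < p' * a i := Nat.mul_pos (by omega) hi
      omega
    have a2 : q' = 0 := by
      by_contra hx
      have : 0 < q' * a j := Nat.mul_pos (by omega) hj
      omega
    have a3 : r' = 0 := by
      by_contra hx
      have : 0 < r' * a k := Nat.mul_pos (by omega) hk
      omega
    simp [a1, a2, a3] at hv
    omega
  have hu1 : u = 1 := by omega
  have hv1 : v = 3 := by omega
  have hx : a i ∣ x ∨ a j ∣ x ∨ a k ∣ x := by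
    rw [hu1] at hu
    by_cases h1 : p = 0 <;> by_cases h2 : q = 0 <;> by_cases h3 : r = 0 <;> simp [h1, h2, h3] at hu
    · right; right; rw [e]; simp [h1, h2]
    · right; left; rw [e]; simp [h1, h3]
    · left; rw [e]; simp [h2, h3]
  have hpos : 0 < p' ∧ 0 < q' ∧ 0 < r' := by
    rw [hv1] at hv
    split_ifs at hv <;> omega
  obtain ⟨y, z, hy, hz, ht⟩ := two_of_piv hg h hpos.1 hpos.2.1 hpos.2.2 e' hx
  have : 2 ∈ LzeroSet a x := by
    rw [mem_L hij hik hjk]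
    rcases ht with ht | ht | ht
    · exact ⟨y, z, 0, by simpa using ht, by simp [hy.ne', hz.ne']⟩
    · exact ⟨y, 0, z, by simpa using ht, by simp [hy.ne', hz.ne']⟩
    · exact ⟨0, y, z, by simpa using ht, by simp [hy.ne', hz.ne']⟩
  exact hno 2 this (by omega)

theorem one_mem (a : Fin 3 → ℕ) (hp : ∀ i, 0 < a i) : 1 ∈ DeltaZeroS a := by
  have h0 := hp 0
  have h1 := hp 1
  refine Set.mem_iUnion.2 ⟨2 * a 0 * a 1, 1, ?_, 2, ?_, by norm_num, rfl, by intros; omega⟩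
  · rw [mem_L (i := 0) (j := 1) (k := 2) (by decide) (by decide) (by decide)]
    exact ⟨2 * a 1, 0, 0, by ring, by simp [h1.ne']⟩
  · rw [mem_L (i := 0) (j := 1) (k := 2) (by decide) (by decide) (by decide)]
    exact ⟨a 1, a 0, 0, by ring, by simp [h1.ne', h0.ne']⟩

theorem sub_one_two (a : Fin 3 → ℕ) (hp : ∀ i, 0 < a i) : DeltaZeroS a ⊆ {1, 2} := by
  intro d hm
  obtain ⟨x, u, hu, v, hv, huv, hd, hno⟩ := Set.mem_iUnion.1 hm
  rw [mem_L (i := 0) (j := 1) (k := 2) (by decide) (by decide) (by decide)] at hu hv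
  obtain ⟨p, q, r, e, hu⟩ := hu
  obtain ⟨p', q', r', e', hv⟩ := hv
  have hv3 : v ≤ 3 := by rw [hv]; split_ifs <;> omega
  have hu0 : u ≠ 0 := by
    intro h0
    have hpp : p = 0 ∧ q = 0 ∧ r = 0 := by
      rw [h0] at hu
      refine ⟨?_, ?_, ?_⟩ <;> by_contra hx <;> simp [hx] at hu <;> omega
    obtain ⟨rfl, rfl, rfl⟩ := hpp
    have hx : x = 0 := by simpa using e
    rw [hx] at e'
    have a1 : p' = 0 := by
      by_contra hx
      have : 0 < p' * a 0 := Nat.mul_pos (by omega) (hp 0)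
      omega
    have a2 : q' = 0 := by
      by_contra hx
      have : 0 < q' * a 1 := Nat.mul_pos (by omega) (hp 1)
      omega
    have a3 : r' = 0 := by
      by_contra hx
      have : 0 < r' * a 2 := Nat.mul_pos (by omega) (hp 2)
      omega
    simp [a1, a2, a3] at hv
    omega
  simp only [Set.mem_insert_iff, Set.mem_singleton_iff]
  omega

theorem gcd3 {i j k : Fin 3} (hij : i ≠ j) (hik : i ≠ k) (hjk : j ≠ k) (a : Fin 3 → ℕ)
    (hgcd : Finset.univ.gcd a = 1) : Nat.gcd (a i) (Nat.gcd (a j) (a k)) = 1 := by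
  have : (Finset.univ : Finset (Fin 3)) = {i, j, k} := by
    revert i j k; decide
  rw [this, Finset.gcd_insert, Finset.gcd_insert, Finset.gcd_singleton] at hgcd
  rw [normalize_eq] at hgcd
  exact hgcd

theorem min3 {i j k : Fin 3} (hij : i ≠ j) (hik : i ≠ k) (hjk : j ≠ k) (a : Fin 3 → ℕ)
    (hmin : MinimalGens a) (y z : ℕ) : a i ≠ y * a j + z * a k := by
  intro h
  refine hmin i ⟨vec i j 0 y z, by simp [vec], ?_⟩
  have : vec i j 0 y z ∈ Zfac a _ := vec_mem hij hik hjk a 0 y z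
  have h' : ∑ t, vec i j 0 y z t * a t = 0 * a i + y * a j + z * a k := this
  rw [h', h]; ring

theorem glue_of_isGluing {i j k : Fin 3} (hij : i ≠ j) (hik : i ≠ k) (hjk : j ≠ k)
    (a : Fin 3 → ℕ) (hgcd : Finset.univ.gcd a = 1) (h : IsGluingAt a i) :
    GlueN (a i) (a j) (a k) := by
  obtain ⟨t', t'', c, b, hi, hb, ⟨n, hn⟩, htc, ⟨z, hz0, hz⟩, hne, hco⟩ := h
  have hg := gcd3 hij hik hjk a hgcd
  have hj := hb j hij.symm
  have hk := hb k hik.symm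
  have hc : c = 1 := by
    have : c ∣ Nat.gcd (a i) (Nat.gcd (a j) (a k)) := by
      refine Nat.dvd_gcd ⟨t'', by rw [hi]; ring⟩ (Nat.dvd_gcd ⟨n * b j, by rw [hj, hn]; ring⟩
        ⟨n * b k, by rw [hk, hn]; ring⟩)
    rw [hg] at this
    exact Nat.dvd_one.1 this
  subst hc
  rw [sum3 hij hik hjk, hz0] at hz
  have hd : t' ∣ Nat.gcd (a j) (a k) := Nat.dvd_gcd ⟨_, hj⟩ ⟨_, hk⟩
  obtain ⟨m, hm⟩ := hd
  refine ⟨m * z j, m * z k, ?_⟩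
  rw [hm, hi, hz, hj, hk]; ring

theorem isGluing_of_glue {i j k : Fin 3} (hij : i ≠ j) (hik : i ≠ k) (hjk : j ≠ k)
    (a : Fin 3 → ℕ) (hgcd : Finset.univ.gcd a = 1) (hmin : MinimalGens a)
    (hp : ∀ i, 0 < a i)
    (h : GlueN (a i) (a j) (a k)) : IsGluingAt a i := by
  obtain ⟨y, z, e⟩ := h
  have hg := gcd3 hij hik hjk a hgcd
  set d := Nat.gcd (a j) (a k) with hd
  have hdj : d ∣ a j := Nat.gcd_dvd_left _ _
  have hdk : d ∣ a k := Nat.gcd_dvd_right _ _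
  have hd0 : 0 < d := Nat.gcd_pos_of_pos_left _ (hp j)
  have all : ∀ t, t = i ∨ t = j ∨ t = k := by
    clear * - hij hik hjk
    revert i j k; decide
  have hdt : ∀ t, t ≠ i → a t = d * (a t / d) := by
    intro t ht
    rcases all t with rfl | rfl | rfl
    · exact absurd rfl ht
    · exact (Nat.mul_div_cancel' hdj).symm
    · exact (Nat.mul_div_cancel' hdk).symm
  refine ⟨d, a i, 1, fun t => a t / d, by ring, hdt, ⟨d, by ring⟩, ?_,
    ⟨vec i j 0 y z, by simp [vec], ?_⟩, ?_, ?_⟩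
  · intro h1
    rw [h1] at e
    exact min3 hij hik hjk a hmin y z (by linarith)
  · rw [sum3 hij hik hjk]
    simp only [vec, hij.symm, hik.symm, hjk.symm, if_true, if_false]
    apply Nat.eq_of_mul_eq_mul_left hd0
    rw [e]
    have h1 := hdt j hij.symm
    have h2 := hdt k hik.symm
    calc y * a j + z * a k = y * (d * (a j / d)) + z * (d * (a k / d)) := by rw [← h1, ← h2]
      _ = _ := by ring
  · intro t ht he
    have h1 := hdt t ht
    have h2 : a t = d * a i := by rw [he]; exact h1
    rcases all t with rfl | rfl | rfl
    · exact ht rfl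
    · exact min3 ht hjk hik a hmin d 0 (by rw [h2]; ring)
    · exact min3 ht hjk.symm hij a hmin d 0 (by rw [h2]; ring)
  · rw [Nat.gcd_comm]; exact hg

/-- For a numerical semigroup with three minimal generators: if `S` admits at most one
expression as a gluing then `Δ₀(S) = {1, 2}`, and if it admits at least two distinct
expressions as a gluing then `Δ₀(S) = {1}`. -/
theorem stmt_17 (a : Fin 3 → ℕ)
    (hgcd : Finset.univ.gcd a = 1)
    (hmin : MinimalGens a) :
    ((∀ i j : Fin 3, IsGluingAt a i → IsGluingAt a j → i = j) →
      DeltaZeroS a = {1, 2}) ∧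
    ((∃ i j : Fin 3, i ≠ j ∧ IsGluingAt a i ∧ IsGluingAt a j) →
      DeltaZeroS a = {1}) := by
  have hp : ∀ i, 0 < a i := by
    intro i
    rcases Nat.eq_zero_or_pos (a i) with h | h
    · exact absurd ⟨fun _ => 0, rfl, by simp [h]⟩ (hmin i)
    · exact h
  have n01 : (0 : Fin 3) ≠ 1 := by decide
  have n02 : (0 : Fin 3) ≠ 2 := by decide
  have n12 : (1 : Fin 3) ≠ 2 := by decide
  constructor
  · intro H
    refine Set.Subset.antisymm (sub_one_two a hp) ?_
    have main : ∀ i j k : Fin 3, i ≠ j → i ≠ k → j ≠ k → GlueN (a i) (a j) (a k) →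
        2 ∈ DeltaZeroS a := by
      intro i j k hij hik hjk hG
      have Gi := isGluing_of_glue hij hik hjk a hgcd hmin hp hG
      rcases gap_of_glue (hp i) (hp j) (hp k) (gcd3 hij hik hjk a hgcd)
        (min3 hij hik hjk a hmin) hG with h | h | h
      · exact two_mem_of_gap hij hik hjk a hp h
      · exact absurd (H _ _ Gi (isGluing_of_glue hij.symm hjk hik a hgcd hmin hp h)) hij
      · exact absurd (H _ _ Gi (isGluing_of_glue hik.symm hjk.symm hij a hgcd hmin hp h)) hik
    have h2 : 2 ∈ DeltaZeroS a := by
      by_cases g0 : GlueN (a 0) (a 1) (a 2)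
      · exact main 0 1 2 n01 n02 n12 g0
      by_cases g1 : GlueN (a 1) (a 0) (a 2)
      · exact main 1 0 2 n01.symm n12 n02 g1
      by_cases g2 : GlueN (a 2) (a 0) (a 1)
      · exact main 2 0 1 n02.symm n12.symm n01 g2
      rcases gap_of_no_glue (hp 0) (hp 1) (hp 2) (min3 n01 n02 n12 a hmin)
        (min3 n01.symm n12 n02 a hmin) (min3 n02.symm n12.symm n01 a hmin) g0 g1 g2 with h | h | h
      · exact two_mem_of_gap n01 n02 n12 a hp h
      · exact two_mem_of_gap n01.symm n12 n02 a hp h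
      · exact two_mem_of_gap n02.symm n12.symm n01 a hp h
    rintro d (rfl | rfl)
    · exact one_mem a hp
    · exact h2
  · rintro ⟨i, j, hij, Gi, Gj⟩
    obtain ⟨k, hik, hjk⟩ : ∃ k : Fin 3, i ≠ k ∧ j ≠ k := by
      clear * - hij
      revert i j; decide
    have h2 : 2 ∉ DeltaZeroS a := by
      rcases piv_of_two (hp i) (hp j) (hp k) (gcd3 hij hik hjk a hgcd)
        (glue_of_isGluing hij hik hjk a hgcd Gi)
        (glue_of_isGluing hij.symm hjk hik a hgcd Gj) with h | h | h
      · exact two_not_mem hij hik hjk a hp (gcd3 hij hik hjk a hgcd) h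
      · exact two_not_mem hij.symm hjk hik a hp (gcd3 hij.symm hjk hik a hgcd) h
      · exact two_not_mem hik.symm hjk.symm hij a hp (gcd3 hik.symm hjk.symm hij a hgcd) h
    refine Set.Subset.antisymm ?_ ?_
    · intro d hd
      rcases sub_one_two a hp hd with h | h
      · exact h
      · rw [Set.mem_singleton_iff] at h
        rw [h] at hd
        exact absurd hd h2
    · rintro d rfl
      exact one_mem a hp
end

section
/- For every integer k ≥ 2 there exists a numerical semigroup S such that Δ_0(S) = {1, 2, …, k − 1}. In particular, 0-delta sets of numerical semigroups can be arbitrarily long intervals. -/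
open Finset

theorem digits_zero (B : ℤ) (hB : 0 < B) : ∀ (m : ℕ) (d : Fin m → ℤ),
    (∀ i, |d i| < B) → ∑ i, d i * B ^ (i : ℕ) = 0 → ∀ i, d i = 0 := by
  intro m
  induction m with
  | zero => intro d _ _ i; exact i.elim0
  | succ m ih =>
    intro d hd hs
    rw [Fin.sum_univ_succ] at hs
    have e : ∑ i : Fin m, d i.succ * B ^ ((i.succ : Fin (m+1)) : ℕ)
        = B * ∑ i : Fin m, d i.succ * B ^ (i : ℕ) := by
      rw [Finset.mul_sum]
      refine Finset.sum_congr rfl fun i _ => ?_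
      rw [Fin.val_succ, pow_succ]; ring
    rw [e] at hs
    simp only [Fin.val_zero, pow_zero, mul_one] at hs
    have h0 : d 0 = 0 := by
      apply Int.eq_zero_of_abs_lt_dvd _ (hd 0)
      exact ⟨-∑ i : Fin m, d i.succ * B ^ (i : ℕ), by linarith⟩
    rw [h0, zero_add] at hs
    have h1 := (mul_eq_zero.mp hs).resolve_left hB.ne'
    have h2 := ih (fun i => d i.succ) (fun i => hd _) h1
    intro i
    refine Fin.cases h0 h2 i

theorem lzero_le {n : ℕ} (z : Fin n → ℕ) : lzero z ≤ n := by
  unfold lzero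
  exact (Finset.card_filter_le _ _).trans (by simp)

theorem upper {n : ℕ} (a : Fin n → ℕ) (ha : ∀ i, 0 < a i) :
    DeltaZeroS a ⊆ Set.Icc 1 (n - 1) := by
  intro d hd
  simp only [DeltaZeroS, Set.mem_iUnion] at hd
  obtain ⟨x, u, ⟨z, hz, rfl⟩, v, ⟨w, hw, rfl⟩, huv, rfl, -⟩ := hd
  have hu : 0 < lzero z := by
    by_contra h
    have h0 : lzero z = 0 := by omega
    have hz0 : ∀ i, z i = 0 := by
      intro i
      unfold lzero at h0
      rw [Finset.card_eq_zero, Finset.filter_eq_empty_iff] at h0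
      simpa using h0 (Finset.mem_univ i)
    have hx : x = 0 := by
      rw [← (hz : ∑ j, z j * a j = x)]; simp [hz0]
    have hw' : ∑ j, w j * a j = 0 := by rw [← hx]; exact hw
    have hw0 : ∀ i, w i = 0 := by
      intro i
      have := (Finset.sum_eq_zero_iff.mp hw') i (Finset.mem_univ i)
      exact (Nat.mul_eq_zero.mp this).resolve_right (ha i).ne'
    have : lzero w = 0 := by unfold lzero; simp [hw0]
    omega
  have := lzero_le w
  constructor <;> omega

theorem lzero_cons {m : ℕ} (z : Fin (m+1) → ℕ) :
    lzero z = (if z 0 ≠ 0 then 1 else 0) + lzero (fun i : Fin m => z i.succ) := by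
  unfold lzero
  rw [Finset.card_filter, Finset.card_filter, Fin.sum_univ_succ]

theorem sum_eps (m s : ℕ) (hs : s ≤ m) :
    ∑ i : Fin m, (if (i : ℕ) < s then 1 else 0) = s := by
  rw [Fin.sum_univ_eq_sum_range (fun i => if i < s then 1 else 0), ← Finset.card_filter]
  have : (Finset.range m).filter (fun i => i < s) = Finset.range s := by
    ext i; simp; omega
  rw [this, Finset.card_range]

/-- The modulus. -/
def genP (m : ℕ) : ℕ := ∑ i : Fin m, (2 * m + 1) ^ (i : ℕ)

/-- The generators. -/
def gens (m : ℕ) : Fin (m + 1) → ℕ :=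
  Fin.cons (genP m) (fun i : Fin m => 4 * genP m + (2 * m + 1) ^ (i : ℕ))

theorem genP_pos {m : ℕ} (hm : 2 ≤ m) : 0 < genP m := by
  unfold genP
  have : NeZero m := ⟨by omega⟩
  exact Finset.sum_pos (fun i _ => by positivity) Finset.univ_nonempty

theorem pow_lt_genP {m : ℕ} (hm : 2 ≤ m) (i : Fin m) : (2 * m + 1) ^ (i : ℕ) < genP m := by
  have : Nontrivial (Fin m) := Fin.nontrivial_iff_two_le.mpr hm
  obtain ⟨j, hj⟩ := exists_ne i
  unfold genP
  exact Finset.single_lt_sum (f := fun i : Fin m => (2 * m + 1) ^ (i : ℕ)) hj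
    (Finset.mem_univ i) (Finset.mem_univ j) (by positivity) (fun _ _ _ => by positivity)

theorem sum_gens {m : ℕ} (z : Fin (m + 1) → ℕ) :
    ∑ j, z j * gens m j = z 0 * genP m + 4 * ((∑ i : Fin m, z i.succ) * genP m)
      + ∑ i : Fin m, z i.succ * (2 * m + 1) ^ (i : ℕ) := by
  rw [Fin.sum_univ_succ]
  simp only [gens, Fin.cons_zero, Fin.cons_succ, mul_add, Finset.sum_add_distrib,
    Finset.sum_mul, Finset.mul_sum]
  rw [add_assoc]
  congr 2
  exact Finset.sum_congr rfl fun i _ => by ring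

theorem gens_pos {m : ℕ} (hm : 2 ≤ m) (i) : 0 < gens m i := by
  have := genP_pos hm
  refine Fin.cases ?_ (fun i => ?_) i
  · simpa [gens] using this
  · simp only [gens, Fin.cons_succ]; positivity

theorem gens_gcd {m : ℕ} (hm : 2 ≤ m) : Finset.univ.gcd (gens m) = 1 := by
  have h0 : Finset.univ.gcd (gens m) ∣ gens m 0 := Finset.gcd_dvd (Finset.mem_univ _)
  have h1 : Finset.univ.gcd (gens m) ∣ gens m (Fin.succ ⟨0, by omega⟩) :=
    Finset.gcd_dvd (Finset.mem_univ _)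
  simp only [gens, Fin.cons_zero, Fin.cons_succ, pow_zero] at h0 h1
  have h2 := (Nat.dvd_add_right (h0.mul_left 4)).mp h1
  exact Nat.dvd_one.mp h2

theorem gens_min {m : ℕ} (hm : 2 ≤ m) : MinimalGens (gens m) := by
  intro i
  rintro ⟨z, hz, hs⟩
  rw [sum_gens] at hs
  have hp := genP_pos hm
  set Y := ∑ i : Fin m, z i.succ with hY
  set p := genP m with hpdef
  have hY0 : Y = 0 → ∑ i : Fin m, z i.succ * (2 * m + 1) ^ (i : ℕ) = 0 := by
    intro h
    have h := Finset.sum_eq_zero_iff.mp h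
    exact Finset.sum_eq_zero fun i hi => by rw [h i hi, zero_mul]
  revert hz hs
  refine Fin.cases ?_ (fun i => ?_) i
  · intro hz hs
    simp only [gens, Fin.cons_zero, hz] at hs
    rw [← hpdef] at hs
    have : Y = 0 := by
      by_contra h
      have := Nat.mul_le_mul_right p (show 1 ≤ Y by omega)
      nlinarith [Nat.zero_le (z 0 * p), Nat.zero_le (∑ i : Fin m, z i.succ * (2 * m + 1) ^ (i : ℕ))]
    rw [hY0 this, this] at hs
    omega
  · intro hz hs
    simp only [gens, Fin.cons_succ] at hs
    rw [← hpdef] at hs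
    have hlt := pow_lt_genP hm i
    rw [← hpdef] at hlt
    have hle : Y ≤ 1 := by
      by_contra h
      have := Nat.mul_le_mul_right p (show 2 ≤ Y by omega)
      nlinarith [Nat.zero_le (z 0 * p), Nat.zero_le (∑ i : Fin m, z i.succ * (2 * m + 1) ^ (i : ℕ))]
    have hBp : 0 < (2 * m + 1) ^ (i : ℕ) := by positivity
    interval_cases hYv : Y
    · rw [hY0 rfl] at hs
      have h1 : p ∣ 4 * p + (2 * m + 1) ^ (i : ℕ) := ⟨z 0, by rw [← hs]; ring⟩
      have h2 := (Nat.dvd_add_right (Dvd.intro_left 4 rfl)).mp h1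
      exact absurd (Nat.le_of_dvd hBp h2) (by omega)
    · have hz0 : z 0 = 0 := by
        by_contra h
        have := Nat.mul_le_mul_right p (show 1 ≤ z 0 by omega)
        nlinarith [Nat.zero_le (z 0 * p), Nat.zero_le (∑ i : Fin m, z i.succ * (2 * m + 1) ^ (i : ℕ))]
      rw [hz0] at hs
      have hs' : ∑ i : Fin m, z i.succ * (2 * m + 1) ^ (i : ℕ) = (2 * m + 1) ^ (i : ℕ) := by
        omega
      have hz1 : ∀ l : Fin m, z l.succ ≤ 1 := by
        intro l
        rw [hY]
        exact Finset.single_le_sum (f := fun i : Fin m => z i.succ) (fun _ _ => Nat.zero_le _)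
          (Finset.mem_univ l)
      have key := digits_zero (2 * m + 1 : ℤ) (by positivity) m
        (fun l => (z l.succ : ℤ) - if l = i then 1 else 0) (by
          intro l
          have := hz1 l
          rw [abs_lt]
          split_ifs <;> constructor <;> omega) (by
          simp only [sub_mul, Finset.sum_sub_distrib, ite_mul, one_mul, zero_mul,
            Finset.sum_ite_eq', Finset.mem_univ, if_true]
          rw [sub_eq_zero]
          exact_mod_cast hs') i
      simp [hz] at key

theorem gens_gap {m : ℕ} (hm : 2 ≤ m) (s : ℕ) (hs : s < m) : m - s ∈ DeltaZeroS (gens m) := by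
  have hp := genP_pos hm
  simp only [DeltaZeroS, Set.mem_iUnion]
  set ε : Fin m → ℕ := fun i => if (i : ℕ) < s then 1 else 0 with hε
  have hεs : ∑ i, ε i = s := sum_eps m s hs.le
  have hε1 : ∀ i, ε i ≤ 1 := by intro i; simp only [hε]; split_ifs <;> omega
  have hεp : ∑ i, ε i * (2 * m + 1) ^ (i : ℕ) ≤ genP m := by
    unfold genP
    refine Finset.sum_le_sum fun i _ => ?_
    calc _ ≤ 1 * (2 * m + 1) ^ (i : ℕ) := Nat.mul_le_mul_right _ (hε1 i)
      _ = _ := one_mul _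
  set z : Fin (m+1) → ℕ := Fin.cons (4 * m + 2) ε with hz
  set w : Fin (m+1) → ℕ := Fin.cons 1 (fun i => 1 + ε i) with hw
  have hεl : lzero ε = s := by
    unfold lzero
    rw [Finset.card_filter, ← hεs]
    refine Finset.sum_congr rfl fun i _ => ?_
    simp only [hε]; split_ifs <;> simp_all
  have hzl : lzero z = s + 1 := by
    rw [lzero_cons]
    simp only [hz, Fin.cons_zero, Fin.cons_succ]
    rw [hεl, if_pos (by omega)]; omega
  have hwl : lzero w = m + 1 := by
    unfold lzero
    rw [Finset.filter_true_of_mem]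
    · simp
    · intro i _
      refine Fin.cases ?_ (fun i => ?_) i
      · simp [hw]
      · simp only [hw, Fin.cons_succ]; omega
  have hxz : ∑ j, z j * gens m j = (4 * m + 2) * genP m + 4 * (s * genP m)
      + ∑ i, ε i * (2 * m + 1) ^ (i : ℕ) := by
    rw [sum_gens]; simp only [hz, Fin.cons_zero, Fin.cons_succ, hεs]
  refine ⟨∑ j, z j * gens m j, lzero z, ⟨z, rfl, rfl⟩, lzero w, ⟨w, ?_, rfl⟩, by omega, by omega, ?_⟩
  · change ∑ j, w j * gens m j = _
    rw [hxz, sum_gens]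
    simp only [hw, Fin.cons_zero, Fin.cons_succ, Finset.sum_add_distrib, hεs, add_mul, one_mul]
    have : ∑ i : Fin m, (2 * m + 1) ^ (i : ℕ) = genP m := rfl
    rw [this]
    simp
    ring
  · rintro _ ⟨y, hy, rfl⟩
    have hy : ∑ j, y j * gens m j = _ := hy
    rw [hxz, sum_gens] at hy
    rw [hzl, hwl]
    set Y := ∑ i : Fin m, y i.succ with hYd
    have hYle : Y ≤ m + s := by
      by_contra h
      have : m + s + 1 ≤ Y := by omega
      nlinarith [Nat.zero_le (y 0 * genP m),
        Nat.zero_le (∑ i : Fin m, y i.succ * (2 * m + 1) ^ (i : ℕ))]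
    have hyY : ∀ l : Fin m, y l.succ ≤ Y := fun l =>
      Finset.single_le_sum (f := fun i : Fin m => y i.succ) (fun _ _ => Nat.zero_le _)
        (Finset.mem_univ l)
    have hyp : ∑ i : Fin m, y i.succ * (2 * m + 1) ^ (i : ℕ) ≤ Y * genP m := by
      unfold genP
      rw [Finset.mul_sum]
      exact Finset.sum_le_sum fun i _ => Nat.mul_le_mul_right _ (hyY i)
    obtain ⟨q, hq⟩ : ∃ q : ℤ, q = 4 * m + 2 + 4 * s - y 0 - 4 * Y := ⟨_, rfl⟩
    set P : ℤ := (genP m : ℤ) with hP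
    have hPp : 0 < P := by rw [hP]; exact_mod_cast hp
    set SY := ∑ i : Fin m, y i.succ * (2 * m + 1) ^ (i : ℕ) with hSY
    set SE := ∑ i, ε i * (2 * m + 1) ^ (i : ℕ) with hSE
    have hqP : q * P = (SY : ℤ) - SE := by
      have : ((y 0 * genP m + 4 * (Y * genP m) + SY : ℕ) : ℤ)
        = ((4 * m + 2) * genP m + 4 * (s * genP m) + SE : ℕ) := by exact_mod_cast hy
      push_cast at this
      rw [hq, hP]; linear_combination -this
    have hSEP : (SE : ℤ) ≤ P := by rw [hP]; exact_mod_cast hεp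
    have hSYP : (SY : ℤ) ≤ Y * P := by rw [hP]; exact_mod_cast hyp
    have hSY0 : (0 : ℤ) ≤ SY := by positivity
    have hSE0 : (0 : ℤ) ≤ SE := by positivity
    have hql : -1 ≤ q := by
      by_contra h
      have : q ≤ -2 := by omega
      nlinarith
    have hqu : q ≤ Y := by
      by_contra h
      have : (Y : ℤ) + 1 ≤ q := by omega
      nlinarith
    have key := digits_zero (2 * m + 1 : ℤ) (by positivity) m
        (fun l => (y l.succ : ℤ) - ε l - q) (by
          intro l
          have := hyY l
          have := hε1 l
          rw [abs_lt]
          constructor <;> omega) (by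
          simp only [sub_mul, Finset.sum_sub_distrib, ← Finset.mul_sum]
          have h1 : (∑ i : Fin m, (2 * (m : ℤ) + 1) ^ (i : ℕ)) = P := by
            rw [hP]; unfold genP; push_cast; rfl
          rw [h1, hqP, hSY, hSE]
          push_cast
          ring)
    have hq0 : 0 ≤ q := by
      have h1 := key ⟨m - 1, by omega⟩
      have h2 : ε ⟨m - 1, by omega⟩ = 0 := by
        simp only [hε]; rw [if_neg]; omega
      simp only [h2] at h1
      omega
    have hYq : (Y : ℤ) = s + m * q := by
      rw [hYd, ← hεs]
      push_cast
      have : ∀ i : Fin m, (y i.succ : ℤ) = ε i + q := fun i => by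
        have := key i; linarith
      simp [this, Finset.sum_add_distrib]
    rintro ⟨h1, h2⟩
    rcases eq_or_lt_of_le hq0 with h0 | h0
    · have : (fun i : Fin m => y i.succ) = ε := by
        funext i
        have := key i
        simp only [← h0] at this
        omega
      rw [lzero_cons, this, hεl] at h1
      split_ifs at h1 <;> omega
    · have hq1 : q = 1 := by
        by_contra h
        have : 2 ≤ q := by omega
        have : (m : ℤ) * 2 ≤ m * q := by gcongr
        omega
      rw [hq1] at hYq
      have hy0 : y 0 = 1 := by omega
      have : lzero y = m + 1 := by
        unfold lzero
        rw [Finset.filter_true_of_mem]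
        · simp
        · intro i _
          refine Fin.cases ?_ (fun i => ?_) i
          · omega
          · have := key i
            omega
      omega

theorem two_three : Finset.univ.gcd ![2, 3] = 1 ∧ MinimalGens ![2, 3] ∧
      DeltaZeroS ![2, 3] = Set.Icc 1 (2 - 1) := by
  refine ⟨by decide, ?_, ?_⟩
  · intro i
    rintro ⟨z, hz, hs⟩
    fin_cases i <;> simp [Fin.sum_univ_two] at hz hs <;> omega
  · apply Set.Subset.antisymm
    · exact upper _ (by decide)
    · intro d hd
      have : d = 1 := by
        have := hd.1; have := hd.2; omega
      subst this
      simp only [DeltaZeroS, Set.mem_iUnion]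
      refine ⟨8, 1, ⟨![4, 0], ?_, by decide⟩, 2, ⟨![1, 2], ?_, by decide⟩, by omega, by omega, ?_⟩
      · simp [Zfac]
      · simp [Zfac]
      · intro t _; omega

/-- For every `k ≥ 2` there is a numerical semigroup `S` (given by minimal generators)
with `Δ₀(S) = {1, 2, …, k − 1}`. -/
theorem stmt_18 (k : ℕ) (hk : 2 ≤ k) :
    ∃ (n : ℕ) (a : Fin n → ℕ),
      Finset.univ.gcd a = 1 ∧ MinimalGens a ∧
      DeltaZeroS a = Set.Icc 1 (k - 1) := by
  rcases eq_or_lt_of_le hk with rfl | hk3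
  · exact ⟨2, ![2, 3], two_three⟩
  · obtain ⟨m, rfl⟩ : ∃ m, k = m + 1 := ⟨k - 1, by omega⟩
    have hm : 2 ≤ m := by omega
    refine ⟨m + 1, gens m, gens_gcd hm, gens_min hm, ?_⟩
    apply Set.Subset.antisymm (upper _ (gens_pos hm))
    intro d hd
    have h1 := hd.1
    have h2 := hd.2
    have := gens_gap hm (m - d) (by omega)
    rwa [show m - (m - d) = d by omega] at this
end
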